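/- arXiv:2508.12127 — 4 statements merged into one kernel-verified Lean document; each statement's English description precedes it below -/
import Mathlib

section
/- Let $p$ be a prime, $\mathcal{M}$ an arbitrary subset of $\mathbb{F}_p^*$ with $|\mathcal{M}| = M$, and $\mathcal{I} = \{1, 2, \ldots, N\} \pmod p \subseteq \mathbb{F}_p^*$ with $N < p$. Then the product set satisfies $|\mathcal{I} \cdot \mathcal{M}| \gg \min\{ p/\log^2 N, \; N^2/\log^2 N, \; NM/\log N \}$. -/
/-! Replace the interval by the primes `q ≤ N`. By Cauchy–Schwarz it suffices to bound the
multiplicative energy, the number of solutions of `q m = r m'` with `q, r` prime and `m, m' ∈ M`.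
For `m = m'` only `q = r` is possible. For fixed `m ≠ m'` the fractions `q / r` are distinct, in
lowest terms, and all represent the same residue modulo `n`, so that `n` divides
`q r' - r q' ≠ 0` for any two of them. Hence the numbers `r / (q + r) ∈ [0, 1]` are
`n / (2N)²`-separated, and there are at most `(2N)² / n + 1` of them. Chebyshev's lower bound for
the number of primes concludes. -/

open Finset

theorem card_le_floor_div_add_one_of_pairwise_le_abs_sub {ι : Type*} {s : Finset ι} {f : ι → ℝ}
    {a b δ : ℝ} (hδ : 0 < δ) (hf : ∀ i ∈ s, f i ∈ Set.Icc a b)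
    (hsep : (s : Set ι).Pairwise fun i j ↦ δ ≤ |f i - f j|) :
    #s ≤ ⌊(b - a) / δ⌋₊ + 1 := by
  have hmaps : Set.MapsTo (fun i ↦ ⌊(f i - a) / δ⌋₊) s (range (⌊(b - a) / δ⌋₊ + 1)) := by
    intro i hi
    simp only [mem_coe, mem_range, Nat.lt_succ_iff]
    have := (hf i hi).2
    gcongr
  have hinj : Set.InjOn (fun i ↦ ⌊(f i - a) / δ⌋₊) s := by
    intro i hi j hj hij
    by_contra hne
    have floor_eq_cast {k : ι} (hk : k ∈ s) : (⌊(f k - a) / δ⌋₊ : ℝ) = ⌊(f k - a) / δ⌋ :=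
      natCast_floor_eq_intCast_floor (div_nonneg (sub_nonneg.2 (hf k hk).1) hδ.le)
    have hfloor : ⌊(f i - a) / δ⌋ = ⌊(f j - a) / δ⌋ := by
      have := congrArg (Nat.cast : ℕ → ℝ) hij
      rw [floor_eq_cast hi, floor_eq_cast hj] at this
      exact_mod_cast this
    have hlt := Int.abs_sub_lt_one_of_floor_eq_floor hfloor
    rw [← sub_div, sub_sub_sub_cancel_right, abs_div, abs_of_pos hδ, div_lt_one hδ] at hlt
    exact hlt.not_ge (hsep hi hj hne)
  simpa only [card_range] using card_le_card_of_injOn _ hmaps hinj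

theorem card_le_floor_sq_div_add_one_of_pairwise_le_abs_det {ι : Type*} {s : Finset ι}
    {x y : ι → ℝ} {L δ : ℝ} (hδ : 0 < δ) (hx : ∀ i ∈ s, 0 ≤ x i) (hy : ∀ i ∈ s, 0 ≤ y i)
    (hpos : ∀ i ∈ s, 0 < x i + y i) (hL : ∀ i ∈ s, x i + y i ≤ L)
    (hdet : (s : Set ι).Pairwise fun i j ↦ δ ≤ |x i * y j - y i * x j|) :
    #s ≤ ⌊L ^ 2 / δ⌋₊ + 1 := by
  rcases s.eq_empty_or_nonempty with rfl | ⟨i₀, hi₀⟩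
  · simp
  have hLpos : 0 < L := (hpos i₀ hi₀).trans_le (hL i₀ hi₀)
  have hmem : ∀ i ∈ s, y i / (x i + y i) ∈ Set.Icc (0 : ℝ) 1 := fun i hi ↦
    ⟨div_nonneg (hy i hi) (hpos i hi).le,
      (div_le_one (hpos i hi)).2 (le_add_of_nonneg_left (hx i hi))⟩
  have hsep : (s : Set ι).Pairwise fun i j ↦
      δ / L ^ 2 ≤ |y i / (x i + y i) - y j / (x j + y j)| := by
    intro i hi j hj hij
    have hi_pos := hpos i hi
    have hj_pos := hpos j hj
    have hsub : y i / (x i + y i) - y j / (x j + y j)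
        = -(x i * y j - y i * x j) / ((x i + y i) * (x j + y j)) := by
      field_simp
      ring
    have hprod : (x i + y i) * (x j + y j) ≤ L ^ 2 :=
      sq L ▸ mul_le_mul (hL i hi) (hL j hj) hj_pos.le hLpos.le
    rw [hsub, abs_div, abs_neg, abs_of_pos (mul_pos hi_pos hj_pos)]
    exact div_le_div₀ (abs_nonneg _) (hdet hi hj hij) (by positivity) hprod
  simpa only [sub_zero, one_div_div] using
    card_le_floor_div_add_one_of_pairwise_le_abs_sub (by positivity) hmem hsep

theorem eq_of_coprime_of_fst_mul_snd_eq {a b : ℕ × ℕ} (ha : a.1.Coprime a.2)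
    (hb : b.1.Coprime b.2) (h : a.1 * b.2 = a.2 * b.1) : a = b := by
  refine Prod.ext (Nat.dvd_antisymm ?_ ?_) (Nat.dvd_antisymm ?_ ?_)
  · exact ha.dvd_of_dvd_mul_left (h ▸ dvd_mul_right _ _)
  · exact hb.dvd_of_dvd_mul_right (h ▸ dvd_mul_left _ _)
  · exact ha.symm.dvd_of_dvd_mul_left (h ▸ dvd_mul_right _ _)
  · exact hb.symm.dvd_of_dvd_mul_right (h ▸ dvd_mul_left _ _)

theorem card_coprime_filter_natCast_eq_mul_le {n : ℕ} (hn : 0 < n) (N : ℕ) (w : ZMod n) :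
    #{a ∈ range (N + 1) ×ˢ range (N + 1) | a.1.Coprime a.2 ∧ (a.1 : ZMod n) = a.2 * w}
      ≤ (2 * N) ^ 2 / n + 1 := by
  set s := {a ∈ range (N + 1) ×ˢ range (N + 1) | a.1.Coprime a.2 ∧ (a.1 : ZMod n) = a.2 * w}
  have hs {a : ℕ × ℕ} (ha : a ∈ s) :
      (a.1 ≤ N ∧ a.2 ≤ N) ∧ a.1.Coprime a.2 ∧ (a.1 : ZMod n) = a.2 * w := by
    simpa only [s, mem_filter, mem_product, mem_range, Nat.lt_succ_iff] using ha
  have hpos : ∀ a ∈ s, 0 < a.1 + a.2 := by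
    intro a ha
    by_contra! h
    have hcop := (hs ha).2.1
    simp [show a.1 = 0 by lia, show a.2 = 0 by lia] at hcop
  have hdet : (s : Set (ℕ × ℕ)).Pairwise fun a b ↦ (n : ℤ) ≤ |(a.1 : ℤ) * b.2 - a.2 * b.1| := by
    intro a ha b hb hab
    obtain ⟨-, ha_cop, haw⟩ := hs ha
    obtain ⟨-, hb_cop, hbw⟩ := hs hb
    have hdvd : (n : ℤ) ∣ (a.1 : ℤ) * b.2 - a.2 * b.1 := by
      rw [← ZMod.intCast_zmod_eq_zero_iff_dvd]
      push_cast
      rw [haw, hbw]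
      ring
    by_contra! hlt
    have hzero := Int.eq_zero_of_abs_lt_dvd hdvd hlt
    exact hab (eq_of_coprime_of_fst_mul_snd_eq ha_cop hb_cop (by zify; linarith))
  have hcard := card_le_floor_sq_div_add_one_of_pairwise_le_abs_det (s := s)
    (x := fun a ↦ a.1) (y := fun a ↦ a.2) (L := (2 * N : ℕ)) (δ := n) (by exact_mod_cast hn)
    (fun a _ ↦ a.1.cast_nonneg) (fun a _ ↦ a.2.cast_nonneg)
    (fun a ha ↦ by exact_mod_cast hpos a ha)
    (fun a ha ↦ by have := (hs ha).1; norm_cast; lia)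
    (fun a ha b hb hab ↦ by exact_mod_cast hdet ha hb hab)
  rwa [← Nat.cast_pow, Nat.floor_div_eq_div] at hcard

section ProductSet

open scoped Pointwise Combinatorics.Additive

theorem mulEnergy_le_of_card_filter_eq_mul_le {α : Type*} [Monoid α] [DecidableEq α]
    {s t : Finset α} {K : ℕ} (ht : ∀ b ∈ t, IsUnit b)
    (hK : ∀ w ≠ 1, #{a ∈ s ×ˢ s | a.1 = a.2 * w} ≤ K) :
    Eₘ[s, t] ≤ #s * #t + K * #t ^ 2 := by
  have hfiber : ∀ b ∈ t ×ˢ t,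
      #{a ∈ s ×ˢ s | a.1 * b.1 = a.2 * b.2} ≤ (if b.1 = b.2 then #s else 0) + K := by
    rintro ⟨b, b'⟩ hb
    obtain ⟨⟨u, rfl⟩, ⟨v, rfl⟩⟩ := (mem_product.1 hb).imp (ht b) (ht b')
    by_cases huv : u = v
    · subst huv
      simp only [Units.mul_left_inj, ← diag_eq_filter, diag_card, ↓reduceIte, Nat.le_add_right]
    · have hw : ((v * u⁻¹ : αˣ) : α) ≠ 1 := by
        rw [Ne, Units.val_eq_one, mul_inv_eq_one]
        exact Ne.symm huv
      refine le_add_left (le_trans (card_le_card ?_) (hK _ hw))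
      refine monotone_filter_right _ fun a _ h ↦ ?_
      rw [Units.val_mul, ← mul_assoc, Units.eq_mul_inv_iff_mul_eq]
      exact h
  calc
    Eₘ[s, t] = ∑ b ∈ t ×ˢ t, #{a ∈ s ×ˢ s | a.1 * b.1 = a.2 * b.2} := by
      simp only [mulEnergy, card_filter, sum_product_right (s ×ˢ s)]
    _ ≤ ∑ b ∈ t ×ˢ t, ((if b.1 = b.2 then #s else 0) + K) := sum_le_sum hfiber
    _ = #s * #t + K * #t ^ 2 := by
      simp [sum_add_distrib, sum_product, card_product]
      ring

variable {n N : ℕ} {A : Finset ℕ} {M : Finset (ZMod n)}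

theorem mulEnergy_image_natCast_le (hn : 0 < n) (hA : (A : Set ℕ).Pairwise Nat.Coprime)
    (hAN : ∀ a ∈ A, a ≤ N) (hAn : ∀ a ∈ A, a.Coprime n) (hM : ∀ m ∈ M, IsUnit m) :
    Eₘ[A.image (↑), M] ≤ #A * #M + ((2 * N) ^ 2 / n + 1) * #M ^ 2 := by
  refine (mulEnergy_le_of_card_filter_eq_mul_le hM fun w hw ↦ ?_).trans
    (Nat.add_le_add_right (Nat.mul_le_mul_right _ card_image_le) _)
  refine le_trans ?_ (card_coprime_filter_natCast_eq_mul_le hn N w)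
  refine (card_le_card ?_).trans (card_image_le (f := Prod.map (Nat.cast : ℕ → ZMod n) Nat.cast))
  rintro ⟨_, _⟩ h
  simp only [mem_filter, mem_product, mem_image] at h
  obtain ⟨⟨⟨q, hq, rfl⟩, r, hr, rfl⟩, hqr⟩ := h
  have hne : q ≠ r := by
    rintro rfl
    exact hw (((ZMod.isUnit_iff_coprime q n).2 (hAn q hq)).mul_eq_left.1 hqr.symm)
  refine mem_image.2 ⟨(q, r), ?_, rfl⟩
  simp only [mem_filter, mem_product, mem_range, Nat.lt_succ_iff]
  exact ⟨⟨hAN q hq, hAN r hr⟩, hA hq hr hne, hqr⟩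

theorem card_sq_mul_card_le_card_mul (hNn : N < n) (hA : (A : Set ℕ).Pairwise Nat.Coprime)
    (hAN : ∀ a ∈ A, a ≤ N) (hAn : ∀ a ∈ A, a.Coprime n) (hM : ∀ m ∈ M, IsUnit m) :
    #A ^ 2 * #M ≤ #(A.image (↑) * M) * (#A + ((2 * N) ^ 2 / n + 1) * #M) := by
  rcases M.eq_empty_or_nonempty with rfl | hMne
  · simp
  have hcard : #(A.image ((↑) : ℕ → ZMod n)) = #A :=
    card_image_of_injOn ((CharP.natCast_injOn_Iio (ZMod n) n).mono
      fun a ha ↦ (hAN a ha).trans_lt hNn)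
  refine Nat.le_of_mul_le_mul_right ?_ hMne.card_pos
  calc
    #A ^ 2 * #M * #M = #(A.image ((↑) : ℕ → ZMod n)) ^ 2 * #M ^ 2 := by rw [hcard]; ring
    _ ≤ #(A.image (↑) * M) * Eₘ[A.image (↑), M] := le_card_mul_mul_mulEnergy _ _
    _ ≤ #(A.image (↑) * M) * (#A * #M + ((2 * N) ^ 2 / n + 1) * #M ^ 2) := by
      grw [mulEnergy_image_natCast_le (Nat.zero_lt_of_lt hNn) hA hAN hAn hM]
    _ = #(A.image (↑) * M) * (#A + ((2 * N) ^ 2 / n + 1) * #M) * #M := by ring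

theorem min_le_six_mul_card_mul (hN : 0 < N) (hNn : N < n)
    (hA : (A : Set ℕ).Pairwise Nat.Coprime) (hAN : ∀ a ∈ A, a ≤ N)
    (hAn : ∀ a ∈ A, a.Coprime n) (hM : ∀ m ∈ M, IsUnit m) :
    min (min (n * ((#A : ℝ) / N) ^ 2) (#A ^ 2)) (#A * #M) ≤ 6 * #(A.image (↑) * M) := by
  set B : ℝ := min (min (n * ((#A : ℝ) / N) ^ 2) (#A ^ 2)) (#A * #M)
  set T := #(A.image (↑) * M)
  set R : ℝ := (N : ℝ) ^ 2 / n
  have hn : 0 < n := hN.trans hNn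
  have hB : 0 ≤ B := by positivity
  have hBR : B * R ≤ #A ^ 2 := calc
    B * R ≤ n * ((#A : ℝ) / N) ^ 2 * R := by
      gcongr
      exact (min_le_left _ _).trans (min_le_left _ _)
    _ = #A ^ 2 := by simp only [R]; field_simp
  have hBA : B ≤ #A ^ 2 := (min_le_left _ _).trans (min_le_right _ _)
  have hBM : B ≤ #A * #M := min_le_right _ _
  have hT : (#A : ℝ) ^ 2 * #M ≤ T * (#A + (4 * R + 1) * #M) := calc
    (#A : ℝ) ^ 2 * #M ≤ T * (#A + (((2 * N) ^ 2 / n : ℕ) + 1) * #M) := by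
      exact_mod_cast card_sq_mul_card_le_card_mul hNn hA hAN hAn hM
    _ ≤ T * (#A + (4 * R + 1) * #M) := by
      gcongr
      refine Nat.cast_div_le.trans_eq ?_
      push_cast
      ring
  rcases A.eq_empty_or_nonempty with rfl | hAne
  · exact hBM.trans (by simp)
  have hpos : 0 < #A + (4 * R + 1) * #M := by
    have := hAne.card_pos
    positivity
  refine le_of_mul_le_mul_right ?_ hpos
  calc
    B * (#A + (4 * R + 1) * #M) = B * #A + 4 * (B * R) * #M + B * #M := by ring
    _ ≤ #A * #M * #A + 4 * #A ^ 2 * #M + #A ^ 2 * #M := by gcongr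
    _ = 6 * (#A ^ 2 * #M) := by ring
    _ ≤ 6 * T * (#A + (4 * R + 1) * #M) := by linarith

theorem image_primesLE_mul_subset {R : Type*} [NatCast R] [Mul R] [DecidableEq R] (N : ℕ)
    (M : Finset R) :
    (Nat.primesLE N).image (↑) * M ⊆ (Icc 1 N ×ˢ M).image fun q : ℕ × R ↦ (q.1 : R) * q.2 := by
  refine mul_subset_iff.2 fun _ hx m hm ↦ ?_
  obtain ⟨q, hq, rfl⟩ := mem_image.1 hx
  rw [Nat.mem_primesLE] at hq
  exact mem_image.2 ⟨(q, m), mem_product.2 ⟨mem_Icc.2 ⟨hq.2.pos, hq.1⟩, hm⟩, rfl⟩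

end ProductSet

theorem pairwise_coprime_primesLE (N : ℕ) : (Nat.primesLE N : Set ℕ).Pairwise Nat.Coprime :=
  fun _ hq _ hr hne ↦ (Nat.coprime_primes (Nat.prime_of_mem_primesLE hq)
    (Nat.prime_of_mem_primesLE hr)).2 hne

theorem coprime_of_mem_primesLE_of_lt_minFac {n N q : ℕ} (hNn : N < n.minFac)
    (hq : q ∈ Nat.primesLE N) : q.Coprime n := by
  obtain ⟨hqN, hq⟩ := Nat.mem_primesLE.1 hq
  refine hq.coprime_iff_not_dvd.2 fun hdvd ↦ ?_
  exact (hqN.trans_lt hNn).not_ge (Nat.minFac_le_of_dvd hq.two_le hdvd)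

theorem lt_of_lt_minFac {n N : ℕ} (hN : 2 ≤ N) (hNn : N < n.minFac) : N < n := by
  refine hNn.trans_le (Nat.minFac_le (Nat.pos_of_ne_zero ?_))
  rintro rfl
  exact hNn.not_ge (Nat.minFac_zero.trans_le hN)

theorem div_log_le_eight_mul_card_primesLE {N : ℕ} (hN : 2 ≤ N) :
    N / Real.log N ≤ 8 * #(Nat.primesLE N) := by
  have hN' : (2 : ℝ) ≤ N := by exact_mod_cast hN
  -- The tangent line of `log` at `4`.
  have hlog : Real.log (N + 1) ≤ 2 * Real.log 2 + ((N + 1) / 4 - 1) := by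
    have h4 : Real.log 4 = 2 * Real.log 2 := by
      rw [show (4 : ℝ) = 2 ^ 2 by norm_num, Real.log_pow, Nat.cast_ofNat]
    have := Real.log_le_sub_one_of_pos (show 0 < ((N : ℝ) + 1) / 4 by positivity)
    rw [Real.log_div (by positivity) (by norm_num), h4] at this
    linarith
  have hnum : (N : ℝ) ≤ 8 * (N * Real.log 2 - Real.log (N + 1)) := by
    nlinarith [Real.log_two_gt_d9]
  calc
    N / Real.log N ≤ 8 * (N * Real.log 2 - Real.log (N + 1)) / Real.log N := by gcongr
    _ = 8 * ((N * Real.log 2 - Real.log (N + 1)) / Real.log N) := mul_div_assoc ..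
    _ ≤ 8 * #(Nat.primesLE N) := by
      rw [Nat.primesLE_card_eq_primeCounting]
      grw [Chebyshev.pi_ge]

theorem min_div_sq_le_sq_mul_min {n N m a L C : ℝ} (hn : 0 ≤ n) (hN : 0 < N) (hL : 0 < L)
    (hm : 0 ≤ m) (hC : 1 ≤ C) (h : N / L ≤ C * a) :
    min (min (n / L ^ 2) (N ^ 2 / L ^ 2)) (N * m / L)
      ≤ C ^ 2 * min (min (n * (a / N) ^ 2) (a ^ 2)) (a * m) := by
  have ha : 0 < a := pos_of_mul_pos_right ((div_pos hN hL).trans_le h) (zero_le_one.trans hC)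
  rw [mul_min_of_nonneg _ _ (sq_nonneg C), mul_min_of_nonneg _ _ (sq_nonneg C)]
  refine min_le_min (min_le_min ?_ ?_) ?_
  · calc
      n / L ^ 2 = n * (N / L / N) ^ 2 := by field_simp
      _ ≤ n * (C * a / N) ^ 2 := by gcongr
      _ = C ^ 2 * (n * (a / N) ^ 2) := by ring
  · calc
      N ^ 2 / L ^ 2 = (N / L) ^ 2 := (div_pow ..).symm
      _ ≤ (C * a) ^ 2 := by gcongr
      _ = C ^ 2 * a ^ 2 := mul_pow ..
  · calc
      N * m / L = N / L * m := mul_div_right_comm ..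
      _ ≤ C * a * m := by gcongr
      _ ≤ C ^ 2 * a * m := by
        gcongr
        exact le_self_pow₀ hC two_ne_zero
      _ = C ^ 2 * (a * m) := mul_assoc ..

theorem stmt_8_general :
    ∃ c : ℝ, 0 < c ∧ ∀ (n N : ℕ), 2 ≤ N → N < n.minFac →
      ∀ (M : Finset (ZMod n)), (∀ m ∈ M, IsUnit m) →
      (((((Finset.Icc 1 N) ×ˢ M).image
          (fun q : ℕ × ZMod n => (q.1 : ZMod n) * q.2)).card : ℝ)
        ≥ c * min (min ((n : ℝ) / (Real.log N) ^ 2) ((N : ℝ) ^ 2 / (Real.log N) ^ 2))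
            ((N : ℝ) * M.card / Real.log N)) := by
  refine ⟨1 / 384, by norm_num, fun n N hN hNn M hM ↦ ?_⟩
  have hN₀ : (0 : ℝ) < N := by exact_mod_cast zero_lt_two.trans_le hN
  have hL : 0 < Real.log N := Real.log_pos (by exact_mod_cast hN)
  have hchebyshev := min_div_sq_le_sq_mul_min (m := #M) n.cast_nonneg hN₀ hL (Nat.cast_nonneg _)
    (by norm_num) (div_log_le_eight_mul_card_primesLE hN)
  have hprod := min_le_six_mul_card_mul (by exact_mod_cast hN₀) (lt_of_lt_minFac hN hNn)
    (pairwise_coprime_primesLE N) (fun _ ↦ Nat.le_of_mem_primesLE)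
    (fun _ ↦ coprime_of_mem_primesLE_of_lt_minFac hNn) hM
  have hsub := (Nat.cast_le (α := ℝ)).2 (card_le_card (image_primesLE_mul_subset N M))
  linarith

theorem stmt_8 :
    ∃ c : ℝ, 0 < c ∧ ∀ (p N : ℕ), p.Prime → 2 ≤ N → N < p →
      ∀ (M : Finset (ZMod p)), (∀ m ∈ M, m ≠ 0) →
      (((((Finset.Icc 1 N) ×ˢ M).image
          (fun q : ℕ × ZMod p => (q.1 : ZMod p) * q.2)).card : ℝ)
        ≥ c * min (min ((p : ℝ) / (Real.log N) ^ 2) ((N : ℝ) ^ 2 / (Real.log N) ^ 2))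
            ((N : ℝ) * M.card / Real.log N)) := by
  obtain ⟨c, hc, h⟩ := stmt_8_general
  refine ⟨c, hc, fun p N hp hN hNp M hM ↦ ?_⟩
  have := Fact.mk hp
  exact h p N hN (hp.minFac_eq.symm ▸ hNp) M fun m hm ↦ (hM m hm).isUnit
end

section
/- Let $p$ be a prime, $L, N$ integers with $0 < L < L + N < p$, and $\ell$ a fixed positive integer. The number $J_\ell(L, N)$ of solutions of $\sum_{i=1}^{\ell} n_i! \equiv \sum_{i=\ell+1}^{2\ell} n_i! \pmod p$ with $L+1 \le n_1, \ldots, n_{2\ell} \le L+N$ satisfies $J_\ell(L, N) \ll N^{2\ell - 1 + 1/(\ell+1)}$, with implied constant depending only on $\ell$. -/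
open Finset

/-!
Put `f n = n!` in `ZMod p` and let `E A` be the number of solutions with all variables in `A`. By
orthogonality `E A` is a `2ℓ`-th moment of the exponential sums of `f` over `A`, so Hölder's
inequality bounds `E` of an interval by the average of `E` over all its windows of length `K`. In
the window starting after `m` one has `(m + k)! = m! · (m + 1) ⋯ (m + k)`, which turns the equation
into a polynomial equation for `m` of degree at most `K`. As the polynomials
`(X + 1) ⋯ (X + k)` are linearly independent, it is an identity only for the `O(K ^ ℓ)`
solutions that permute the variables; any other choice of the `2ℓ` offsets `k` is a solution for at
most `K` windows. The choice `K ≈ N ^ (1 / (ℓ + 1))` balances the two contributions.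
-/

open Polynomial
open scoped Nat

section SumEnergy

variable {ι κ τ G H : Type*}

/-- The `ℓ`-fold additive energy of `f` on `A`: the number of solutions of
`f (x 1) + ⋯ + f (x ℓ) = f (y 1) + ⋯ + f (y ℓ)` with all variables in `A`, counted as ordered
pairs `(x, y)` of `ℓ`-tuples of elements of `A`. -/
def sumEnergy [AddCommMonoid G] [DecidableEq G] (ℓ : ℕ) (f : ι → G) (A : Finset ι) : ℕ :=
  #{t ∈ (Fintype.piFinset fun _ : Fin ℓ ↦ A) ×ˢ (Fintype.piFinset fun _ : Fin ℓ ↦ A) |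
    ∑ i, f (t.1 i) = ∑ i, f (t.2 i)}

section AddCommMonoid

variable [AddCommMonoid G] [DecidableEq G] [AddCommMonoid H] [DecidableEq H]

lemma card_piFinset_product_self (ℓ : ℕ) (A : Finset ι) :
    #((Fintype.piFinset fun _ : Fin ℓ ↦ A) ×ˢ (Fintype.piFinset fun _ : Fin ℓ ↦ A)) =
      #A ^ (2 * ℓ) := by
  rw [card_product, Fintype.card_piFinset_const, two_mul, pow_add]

lemma sumEnergy_le_card_pow (ℓ : ℕ) (f : ι → G) (A : Finset ι) :
    sumEnergy ℓ f A ≤ #A ^ (2 * ℓ) :=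
  (card_filter_le _ _).trans_eq (card_piFinset_product_self ℓ A)

lemma sum_filter_lt_sumEnergy_le (ℓ : ℕ) (f : ℕ → G) {K : ℕ} {T : Finset ℕ} {A : ℕ → Finset ℕ}
    (hA : ∀ j ∈ T, A j ⊆ Ioc (j - K) j) :
    ∑ j ∈ T with j < K, sumEnergy ℓ f (A j) ≤ K * K ^ (2 * ℓ) := by
  have card_low_le : #{j ∈ T | j < K} ≤ K := by
    refine (card_le_card (t := range K) fun j hj ↦ ?_).trans_eq (card_range K)
    exact mem_range.2 (mem_filter.1 hj).2
  have card_window_le {j : ℕ} (hj : j ∈ T) : #(A j) ≤ K := by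
    refine (card_le_card (hA j hj)).trans ?_
    rw [Nat.card_Ioc]
    omega
  refine (sum_le_card_nsmul _ _ (K ^ (2 * ℓ)) fun j hj ↦ ?_).trans
    (Nat.mul_le_mul_right _ card_low_le)
  exact (sumEnergy_le_card_pow _ _ _).trans
    (Nat.pow_le_pow_left (card_window_le (mem_filter.1 hj).1) _)

lemma sumEnergy_le_mul_of_card_le {ℓ : ℕ} (hℓ : ℓ ≠ 0) (f : ι → G) {A : Finset ι} (hA : #A ≤ ℓ)
    {x : ℝ} (hx : 0 ≤ x) (hxA : x ^ (ℓ + 1) = #A) :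
    (sumEnergy ℓ f A : ℝ) ≤ ℓ * (#A ^ (2 * ℓ - 1) * x) := by
  have card_le : (#A : ℝ) ≤ ℓ * x := by
    rcases lt_or_ge x 1 with hx1 | hx1
    · have : #A = 0 := by
        have : (#A : ℝ) < 1 := hxA ▸ pow_lt_one₀ hx hx1 ℓ.succ_ne_zero
        exact Nat.lt_one_iff.1 (by exact_mod_cast this)
      rw [this, Nat.cast_zero]
      positivity
    · exact (Nat.cast_le.2 hA).trans (le_mul_of_one_le_right ℓ.cast_nonneg hx1)
  calc
    (sumEnergy ℓ f A : ℝ) ≤ #A ^ (2 * ℓ) := by exact_mod_cast sumEnergy_le_card_pow ℓ f A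
    _ = #A ^ (2 * ℓ - 1) * #A := (pow_sub_one_mul (mul_ne_zero two_ne_zero hℓ) _).symm
    _ ≤ #A ^ (2 * ℓ - 1) * (ℓ * x) := by gcongr
    _ = _ := by ring

lemma sumEnergy_le_of_injOn {ℓ : ℕ} {f : ι → G} {g : κ → H} {A : Finset ι} {B : Finset κ}
    {e : ι → κ} (heAB : Set.MapsTo e A B) (he : Set.InjOn e A) {θ : H →+ G}
    (hθ : Function.Injective θ) (hfg : ∀ n ∈ A, f n = θ (g (e n))) :
    sumEnergy ℓ f A ≤ sumEnergy ℓ g B := by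
  have sum_eq {x : Fin ℓ → ι} (hx : ∀ i, x i ∈ A) : ∑ i, f (x i) = θ (∑ i, g (e (x i))) := by
    rw [map_sum]
    exact sum_congr rfl fun i _ ↦ hfg _ (hx i)
  refine card_le_card_of_injOn (fun t ↦ (e ∘ t.1, e ∘ t.2)) ?_ ?_
  · rintro ⟨x, y⟩ h
    simp only [coe_filter, mem_product, Fintype.mem_piFinset, Set.mem_ofPred_eq] at h ⊢
    obtain ⟨⟨hx, hy⟩, hxy⟩ := h
    rw [sum_eq hx, sum_eq hy] at hxy
    exact ⟨⟨fun i ↦ heAB (hx i), fun i ↦ heAB (hy i)⟩, hθ hxy⟩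
  · rintro ⟨x, y⟩ h ⟨x', y'⟩ h' heq
    simp only [coe_filter, mem_product, Fintype.mem_piFinset, Set.mem_ofPred_eq] at h h'
    simp only [Prod.mk.injEq] at heq ⊢
    exact ⟨funext fun i ↦ he (h.1.1 i) (h'.1.1 i) (congrFun heq.1 i),
      funext fun i ↦ he (h.1.2 i) (h'.1.2 i) (congrFun heq.2 i)⟩

end AddCommMonoid

section Fourier

variable [AddCommGroup G] [DecidableEq G]

omit [DecidableEq G] in
lemma norm_sum_addChar_pow_two_mul [Finite G] (ψ : AddChar G ℂ) (ℓ : ℕ) (f : ι → G)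
    (A : Finset ι) :
    ((‖∑ n ∈ A, ψ (f n)‖ ^ (2 * ℓ) : ℝ) : ℂ) =
      ∑ t ∈ (Fintype.piFinset fun _ : Fin ℓ ↦ A) ×ˢ (Fintype.piFinset fun _ : Fin ℓ ↦ A),
        ψ (∑ i, f (t.1 i) - ∑ i, f (t.2 i)) := by
  have map_sum_eq_prod (g : Fin ℓ → G) : ψ (∑ i, g i) = ∏ i, ψ (g i) :=
    map_prod ψ.toMonoidHom (fun i ↦ Multiplicative.ofAdd (g i)) univ
  calc
    _ = (∑ n ∈ A, ψ (f n)) ^ ℓ * (∑ n ∈ A, ψ (-f n)) ^ ℓ := by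
      rw [← mul_pow, pow_mul]
      push_cast
      rw [← Complex.mul_conj', map_sum]
      simp only [AddChar.map_neg_eq_conj]
    _ = _ := by
      rw [sum_pow', sum_pow', sum_mul_sum, sum_product]
      simp only [sub_eq_add_neg, ← sum_neg_distrib, AddChar.map_add_eq_mul, map_sum_eq_prod]

lemma card_mul_sumEnergy [Fintype G] (ℓ : ℕ) (f : ι → G) (A : Finset ι) :
    (Fintype.card G : ℝ) * sumEnergy ℓ f A =
      ∑ ψ : AddChar G ℂ, ‖∑ n ∈ A, ψ (f n)‖ ^ (2 * ℓ) := by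
  apply Complex.ofReal_injective
  rw [Complex.ofReal_sum]
  simp only [norm_sum_addChar_pow_two_mul]
  rw [sum_comm]
  simp only [AddChar.sum_apply_eq_ite, sub_eq_zero]
  rw [← sum_filter, sum_const, nsmul_eq_mul, mul_comm]
  simp [sumEnergy]

lemma mul_norm_sum_le_of_cover {I : Finset ι} {T : Finset τ} {A : τ → Finset ι} {K : ℕ}
    [DecidableEq ι] (hA : ∀ j ∈ T, A j ⊆ I) (hK : ∀ n ∈ I, #{j ∈ T | n ∈ A j} = K) (g : ι → ℂ) :
    (K : ℝ) * ‖∑ n ∈ I, g n‖ ≤ ∑ j ∈ T, ‖∑ n ∈ A j, g n‖ := by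
  have cover : ∑ j ∈ T, ∑ n ∈ A j, g n = K * ∑ n ∈ I, g n := by
    rw [sum_comm' (t' := I) (s' := fun n ↦ {j ∈ T | n ∈ A j})
      (fun j n ↦ by grind), mul_sum]
    exact sum_congr rfl fun n hn ↦ by rw [sum_const, hK n hn, nsmul_eq_mul]
  rw [← Complex.norm_natCast, ← norm_mul, ← cover]
  exact norm_sum_le _ _

lemma pow_mul_sumEnergy_le_of_cover [Finite G] [DecidableEq ι] {ℓ : ℕ} (hℓ : ℓ ≠ 0) (f : ι → G)
    {I : Finset ι} {T : Finset τ} {A : τ → Finset ι} {K : ℕ} (hA : ∀ j ∈ T, A j ⊆ I)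
    (hK : ∀ n ∈ I, #{j ∈ T | n ∈ A j} = K) :
    K ^ (2 * ℓ) * sumEnergy ℓ f I ≤ #T ^ (2 * ℓ - 1) * ∑ j ∈ T, sumEnergy ℓ f (A j) := by
  have := Fintype.ofFinite G
  have holder (ψ : AddChar G ℂ) : (K : ℝ) ^ (2 * ℓ) * ‖∑ n ∈ I, ψ (f n)‖ ^ (2 * ℓ) ≤
      (#T : ℝ) ^ (2 * ℓ - 1) * ∑ j ∈ T, ‖∑ n ∈ A j, ψ (f n)‖ ^ (2 * ℓ) := by
    obtain ⟨m, hm⟩ : ∃ m, 2 * ℓ = m + 1 := ⟨2 * ℓ - 1, by omega⟩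
    rw [← mul_pow, hm, Nat.add_sub_cancel]
    exact (pow_le_pow_left₀ (by positivity) (mul_norm_sum_le_of_cover hA hK _) _).trans
      (pow_sum_le_card_mul_sum_pow (fun _ _ ↦ norm_nonneg _) _)
  have hG : (0 : ℝ) < Fintype.card G := by exact_mod_cast Fintype.card_pos
  rify
  refine le_of_mul_le_mul_left ?_ hG
  rw [mul_left_comm, card_mul_sumEnergy, mul_left_comm, mul_sum T]
  simp only [card_mul_sumEnergy]
  rw [sum_comm, mul_sum, mul_sum]
  exact sum_le_sum fun ψ _ ↦ holder ψ

lemma pow_mul_sumEnergy_Icc_le [Finite G] {ℓ : ℕ} (hℓ : ℓ ≠ 0) (f : ℕ → G) (a b K : ℕ) :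
    K ^ (2 * ℓ) * sumEnergy ℓ f (Icc a b) ≤ #(Ico a (b + K)) ^ (2 * ℓ - 1) *
      ∑ j ∈ Ico a (b + K), sumEnergy ℓ f {n ∈ Icc a b | j ∈ Ico n (n + K)} := by
  refine pow_mul_sumEnergy_le_of_cover hℓ f (fun j _ ↦ filter_subset _ _) fun n hn ↦ ?_
  have : {j ∈ Ico a (b + K) | n ∈ {n ∈ Icc a b | j ∈ Ico n (n + K)}} = Ico n (n + K) := by
    ext j
    simp only [mem_filter, mem_Icc, mem_Ico] at hn ⊢
    omega
  rw [this, Nat.card_Ico, Nat.add_sub_cancel_left]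

end Fourier

section LinearIndependent

variable {R M : Type*} [Semiring R] [AddCommMonoid M] [Module R M]

lemma exists_perm_of_sum_eq_sum [Fintype ι] {b : κ → M} (hb : LinearIndependent R b)
    (hR : Set.InjOn (Nat.cast : ℕ → R) (Set.Iic (Fintype.card ι))) {u v : ι → κ}
    (h : ∑ i, b (u i) = ∑ i, b (v i)) : ∃ σ : Equiv.Perm ι, v ∘ σ = u := by
  classical
  have linearCombination_eq (w : ι → κ) : Finsupp.linearCombination R b
      (∑ i, Finsupp.single (w i) 1) = ∑ i, b (w i) := by simp
  have apply_eq_card (w : ι → κ) (c : κ) :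
      (∑ i, Finsupp.single (w i) (1 : R)) c = (Fintype.card {i // w i = c} : R) := by
    simp [Finsupp.finsetSum_apply, Finsupp.single_apply, Fintype.card_subtype]
  have card_fiber_eq (c : κ) : Fintype.card {i // u i = c} = Fintype.card {i // v i = c} := by
    have hsingle : ∑ i, Finsupp.single (u i) (1 : R) = ∑ i, Finsupp.single (v i) 1 :=
      hb (by rw [linearCombination_eq, linearCombination_eq, h])
    apply hR (Fintype.card_subtype_le _) (Fintype.card_subtype_le _)
    rw [← apply_eq_card, ← apply_eq_card, hsingle]
  exact ⟨Equiv.ofFiberEquiv fun c ↦ Fintype.equivOfCardEq (card_fiber_eq c),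
    funext fun i ↦ Equiv.ofFiberEquiv_map _ i⟩

lemma sumEnergy_le_of_linearIndependent [DecidableEq M] {ℓ : ℕ} {b : κ → M}
    (hb : LinearIndependent R b) (hR : Set.InjOn (Nat.cast : ℕ → R) (Set.Iic ℓ)) (B : Finset κ) :
    sumEnergy ℓ b B ≤ ℓ ! * #B ^ ℓ := by
  classical
  calc
    _ ≤ #(((univ : Finset (Equiv.Perm (Fin ℓ))) ×ˢ Fintype.piFinset fun _ : Fin ℓ ↦ B).image
        fun s ↦ (s.2 ∘ s.1, s.2)) := by
      refine card_le_card ?_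
      rintro ⟨u, v⟩ huv
      simp only [mem_filter, mem_product] at huv
      obtain ⟨σ, rfl⟩ := exists_perm_of_sum_eq_sum hb (by rwa [Fintype.card_fin]) huv.2
      exact mem_image.2 ⟨(σ, v), by simpa using huv.1.2, rfl⟩
    _ ≤ _ := card_image_le
    _ = _ := by
      rw [card_product, card_univ, Fintype.card_perm, Fintype.card_fin,
        Fintype.card_piFinset_const]

end LinearIndependent

end SumEnergy

section Polynomial

variable {τ κ R : Type*} [CommRing R] [IsDomain R] [DecidableEq R]

lemma card_filter_eval_eq_zero_le {P : R[X]} (hP : P ≠ 0) {T : Finset τ} {x : τ → R}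
    (hx : Set.InjOn x T) : #{j ∈ T | P.eval (x j) = 0} ≤ P.natDegree := by
  rw [← card_image_of_injOn (hx.mono (coe_subset.2 (filter_subset _ _)))]
  refine card_le_degree_of_subset_roots fun y hy ↦ ?_
  obtain ⟨j, hj, rfl⟩ := mem_image.1 hy
  exact (mem_roots hP).2 (mem_filter.1 hj).2

lemma sum_sumEnergy_eval_le [DecidableEq R[X]] (ℓ : ℕ) {P : κ → R[X]} {B : Finset κ} {d : ℕ}
    (hd : ∀ k ∈ B, (P k).natDegree ≤ d) {T : Finset τ} {x : τ → R} (hx : Set.InjOn x T) :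
    ∑ j ∈ T, sumEnergy ℓ (fun k ↦ (P k).eval (x j)) B ≤
      sumEnergy ℓ P B * #T + #B ^ (2 * ℓ) * d := by
  set U := (Fintype.piFinset fun _ : Fin ℓ ↦ B) ×ˢ (Fintype.piFinset fun _ : Fin ℓ ↦ B) with hU
  let D (w : (Fin ℓ → κ) × (Fin ℓ → κ)) : R[X] := ∑ i, P (w.1 i) - ∑ i, P (w.2 i)
  have natDegree_D_le {w} (hw : w ∈ U) : (D w).natDegree ≤ d := by
    simp only [hU, mem_product, Fintype.mem_piFinset] at hw
    exact (natDegree_sub_le _ _).trans <| max_le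
      (natDegree_sum_le_of_forall_le _ _ fun i _ ↦ hd _ (hw.1 i))
      (natDegree_sum_le_of_forall_le _ _ fun i _ ↦ hd _ (hw.2 i))
  calc
    _ = ∑ w ∈ U, #{j ∈ T | (D w).eval (x j) = 0} := by
      simp only [sumEnergy, D, eval_sub, eval_finsetSum, sub_eq_zero]
      exact sum_card_bipartiteAbove_eq_sum_card_bipartiteBelow _
    _ ≤ ∑ w ∈ U, ((if D w = 0 then #T else 0) + d) := by
      refine sum_le_sum fun w hw ↦ ?_
      split_ifs with h
      · exact (card_filter_le _ _).trans (Nat.le_add_right _ _)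
      · exact ((card_filter_eval_eq_zero_le h hx).trans (natDegree_D_le hw)).trans
          (Nat.le_add_left _ _)
    _ = _ := by
      simp only [D, sub_eq_zero]
      rw [sum_add_distrib, ← sum_filter, sum_const, sum_const, smul_eq_mul, smul_eq_mul,
        hU, card_piFinset_product_self, sumEnergy]

omit [DecidableEq R] in
lemma linearIndependent_ascPochhammer : LinearIndependent R (ascPochhammer R) :=
  let S : Polynomial.Sequence R :=
    { elems' := ascPochhammer R
      degree_eq' := fun k ↦ by
        rw [degree_eq_natDegree (monic_ascPochhammer R k).ne_zero, ascPochhammer_natDegree] }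
  S.linearIndependent

lemma sumEnergy_factorial_le_ascPochhammer (ℓ : ℕ) {m K : ℕ} (hm : (m ! : R) ≠ 0) {A : Finset ℕ}
    (hA : A ⊆ Ioc m (m + K)) :
    sumEnergy ℓ (fun n ↦ (n ! : R)) A ≤
      sumEnergy ℓ (fun k ↦ (ascPochhammer R k).eval ((m : R) + 1)) (Ioc 0 K) := by
  have hA' {n : ℕ} (hn : n ∈ A) : m < n ∧ n ≤ m + K := mem_Ioc.1 (hA hn)
  refine sumEnergy_le_of_injOn (e := (· - m)) (θ := AddMonoidHom.mulLeft (m ! : R))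
    (fun n hn ↦ ?_) (fun n hn n' hn' h ↦ ?_) (mul_right_injective₀ hm) fun n hn ↦ ?_
  · have := hA' hn
    simp only [coe_Ioc, Set.mem_Ioc]
    omega
  · have := hA' hn
    have := hA' hn'
    dsimp only at h
    omega
  · rw [AddMonoidHom.coe_mulLeft, ← Nat.cast_succ, ascPochhammer_nat_eq_natCast_ascFactorial,
      ← Nat.cast_mul, Nat.factorial_mul_ascFactorial, Nat.add_sub_cancel' (hA' hn).1.le]

end Polynomial

section Factorial

variable {ℓ p : ℕ} [Fact p.Prime]

lemma sum_sumEnergy_factorial_window_le {τ : Type*} (hℓp : ℓ < p) (K : ℕ) {T : Finset τ}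
    {m : τ → ℕ} (hm : Set.InjOn m T) (hmp : ∀ j ∈ T, m j < p) {A : τ → Finset ℕ}
    (hA : ∀ j ∈ T, A j ⊆ Ioc (m j) (m j + K)) :
    ∑ j ∈ T, sumEnergy ℓ (fun n ↦ (n ! : ZMod p)) (A j) ≤
      ℓ ! * K ^ ℓ * #T + K ^ (2 * ℓ) * K := by
  classical
  have cast_injOn := CharP.natCast_injOn_Iio (ZMod p) p
  have factorial_ne_zero {n : ℕ} (hn : n < p) : (n ! : ZMod p) ≠ 0 := by
    rw [Ne, ZMod.natCast_eq_zero_iff, (Fact.out : p.Prime).dvd_factorial]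
    exact hn.not_ge
  have hx : Set.InjOn (fun j ↦ (m j : ZMod p) + 1) T := fun i hi j hj h ↦
    hm hi hj (cast_injOn (hmp i hi) (hmp j hj) (add_right_cancel h))
  calc
    _ ≤ ∑ j ∈ T,
        sumEnergy ℓ (fun k ↦ (ascPochhammer (ZMod p) k).eval ((m j : ZMod p) + 1)) (Ioc 0 K) :=
      sum_le_sum fun j hj ↦
        sumEnergy_factorial_le_ascPochhammer ℓ (factorial_ne_zero (hmp j hj)) (hA j hj)
    _ ≤ sumEnergy ℓ (ascPochhammer (ZMod p)) (Ioc 0 K) * #T + #(Ioc 0 K) ^ (2 * ℓ) * K :=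
      sum_sumEnergy_eval_le ℓ
        (fun k hk ↦ (ascPochhammer_natDegree (ZMod p) k).trans_le (mem_Ioc.1 hk).2) hx
    _ ≤ ℓ ! * #(Ioc 0 K) ^ ℓ * #T + #(Ioc 0 K) ^ (2 * ℓ) * K := by
      gcongr
      exact sumEnergy_le_of_linearIndependent linearIndependent_ascPochhammer
        (cast_injOn.mono fun n hn ↦ lt_of_le_of_lt hn hℓp) _
    _ = _ := by rw [Nat.card_Ioc, Nat.sub_zero]

lemma sum_sumEnergy_factorial_Ioc_le (hℓp : ℓ < p) {K : ℕ} {T : Finset ℕ}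
    (hT : ∀ j ∈ T, j < p + K) {A : ℕ → Finset ℕ} (hA : ∀ j ∈ T, A j ⊆ Ioc (j - K) j) :
    ∑ j ∈ T, sumEnergy ℓ (fun n ↦ (n ! : ZMod p)) (A j) ≤
      ℓ ! * K ^ ℓ * #T + 2 * K ^ (2 * ℓ + 1) := by
  -- `j - K` truncates to `0` for all `j < K`, so these windows share their left end.
  have low : ∑ j ∈ T with j < K, sumEnergy ℓ (fun n ↦ (n ! : ZMod p)) (A j) ≤ K * K ^ (2 * ℓ) :=
    sum_filter_lt_sumEnergy_le ℓ _ hA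
  have high : ∑ j ∈ T with ¬ j < K, sumEnergy ℓ (fun n ↦ (n ! : ZMod p)) (A j) ≤
      ℓ ! * K ^ ℓ * #T + K ^ (2 * ℓ) * K := by
    have mem_high {j : ℕ} (hj : j ∈ ({j ∈ T | ¬ j < K} : Finset ℕ)) : j ∈ T ∧ K ≤ j :=
      (mem_filter.1 hj).imp_right not_lt.1
    refine (sum_sumEnergy_factorial_window_le hℓp K (m := (· - K)) (fun i hi j hj h ↦ ?_)
      (fun j hj ↦ ?_) fun j hj ↦ ?_).trans ?_
    · exact (tsub_left_inj (mem_high hi).2 (mem_high hj).2).1 h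
    · exact (tsub_lt_iff_right (mem_high hj).2).2 (hT j (mem_high hj).1)
    · rw [Nat.sub_add_cancel (mem_high hj).2]
      exact hA j (mem_high hj).1
    · gcongr
      exact filter_subset _ _
  rw [← sum_filter_add_sum_filter_not T (· < K)]
  refine (add_le_add low high).trans_eq ?_
  ring

lemma pow_mul_sumEnergy_factorial_Icc_le (hℓ : ℓ ≠ 0) (hℓp : ℓ < p) {L N K : ℕ}
    (hLN : L + N < p) (hKN : K ≤ N) :
    K ^ (2 * ℓ) * sumEnergy ℓ (fun n ↦ (n ! : ZMod p)) (Icc (L + 1) (L + N)) ≤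
      (2 * N) ^ (2 * ℓ - 1) * (ℓ ! * K ^ ℓ * (2 * N) + 2 * K ^ (2 * ℓ + 1)) := by
  have hcard : #(Ico (L + 1) (L + N + K)) ≤ 2 * N := by
    rw [Nat.card_Ico]
    omega
  have window_subset (j : ℕ) :
      {n ∈ Icc (L + 1) (L + N) | j ∈ Ico n (n + K)} ⊆ Ioc (j - K) j := fun n hn ↦ by
    simp only [mem_filter, mem_Icc, mem_Ico] at hn
    exact mem_Ioc.2 (by omega)
  have base_lt (j : ℕ) (hj : j ∈ Ico (L + 1) (L + N + K)) : j < p + K :=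
    (mem_Ico.1 hj).2.trans (Nat.add_lt_add_right hLN K)
  refine (pow_mul_sumEnergy_Icc_le hℓ _ _ _ K).trans ?_
  grw [sum_sumEnergy_factorial_Ioc_le hℓp base_lt fun j _ ↦ window_subset j, hcard]

lemma sumEnergy_factorial_Icc_le (hℓ : ℓ ≠ 0) (hℓp : ℓ < p) {L N : ℕ} (hLN : L + N < p) {x : ℝ}
    (hx : 1 ≤ x) (hxN : x ^ (ℓ + 1) = N) :
    (sumEnergy ℓ (fun n ↦ (n ! : ZMod p)) (Icc (L + 1) (L + N)) : ℝ) ≤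
      2 ^ (2 * ℓ) * (ℓ ! + 2) * (N ^ (2 * ℓ - 1) * x) := by
  set E := sumEnergy ℓ (fun n ↦ (n ! : ZMod p)) (Icc (L + 1) (L + N))
  set K := ⌈x⌉₊
  have hxK : x ≤ K := Nat.le_ceil x
  have hKx : (K : ℝ) ≤ 2 * x := by
    linarith [Nat.ceil_lt_add_one (zero_le_one.trans hx)]
  have hKN : K ≤ N := Nat.ceil_le.2 (hxN ▸ le_self_pow₀ hx ℓ.succ_ne_zero)
  have hNK : (N : ℝ) ≤ K ^ ℓ * x := by
    rw [← hxN, pow_succ]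
    gcongr
  have hK : (0 : ℝ) < K ^ (2 * ℓ) := by
    have : 0 < (K : ℝ) := by linarith
    positivity
  refine le_of_mul_le_mul_left ?_ hK
  calc
    (K : ℝ) ^ (2 * ℓ) * E
      ≤ (2 * N) ^ (2 * ℓ - 1) * (ℓ ! * K ^ ℓ * (2 * N) + 2 * K ^ (2 * ℓ + 1)) := by
        exact_mod_cast pow_mul_sumEnergy_factorial_Icc_le hℓ hℓp hLN hKN
    _ ≤ (2 * N) ^ (2 * ℓ - 1) *
        (ℓ ! * K ^ ℓ * (2 * (K ^ ℓ * x)) + 2 * (K ^ (2 * ℓ) * (2 * x))) := by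
        rw [pow_succ]
        gcongr
    _ = _ := by
        rw [mul_pow, ← pow_sub_one_mul (mul_ne_zero two_ne_zero hℓ) (2 : ℝ)]
        ring

end Factorial

lemma rpow_two_mul_sub_one_add_one_div {N : ℝ} (hN : 0 ≤ N) {ℓ : ℕ} (hℓ : ℓ ≠ 0) :
    N ^ (2 * (ℓ : ℝ) - 1 + 1 / ((ℓ : ℝ) + 1)) = N ^ (2 * ℓ - 1) * N ^ (1 / ((ℓ : ℝ) + 1)) := by
  have cast_exponent : 2 * (ℓ : ℝ) - 1 = (2 * ℓ - 1 : ℕ) := by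
    rw [Nat.cast_sub (by omega)]
    push_cast
    rfl
  rw [cast_exponent, Real.rpow_add_of_nonneg hN (Nat.cast_nonneg _) (by positivity),
    Real.rpow_natCast]

theorem stmt_11 (ℓ : ℕ) (hℓ : 1 ≤ ℓ) :
    ∃ C : ℝ, 0 < C ∧ ∀ (p L N : ℕ), p.Prime → 0 < L → L + N < p →
      ((((Fintype.piFinset fun _ : Fin ℓ => Finset.Icc (L + 1) (L + N)) ×ˢ
          (Fintype.piFinset fun _ : Fin ℓ => Finset.Icc (L + 1) (L + N))).filter
          (fun t : (Fin ℓ → ℕ) × (Fin ℓ → ℕ) =>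
            ∑ i, (Nat.factorial (t.1 i) : ZMod p) = ∑ i, (Nat.factorial (t.2 i) : ZMod p))).card : ℝ)
        ≤ C * (N : ℝ) ^ (2 * (ℓ : ℝ) - 1 + 1 / ((ℓ : ℝ) + 1)) := by
  have hℓ0 : ℓ ≠ 0 := Nat.one_le_iff_ne_zero.1 hℓ
  refine ⟨2 ^ (2 * ℓ) * (ℓ ! + 2), by positivity, fun p L N hp _ hLN ↦ ?_⟩
  have : Fact p.Prime := ⟨hp⟩
  change (sumEnergy ℓ (fun n ↦ (n ! : ZMod p)) (Icc (L + 1) (L + N)) : ℝ) ≤ _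
  rw [rpow_two_mul_sub_one_add_one_div N.cast_nonneg hℓ0]
  set x : ℝ := (N : ℝ) ^ (1 / ((ℓ : ℝ) + 1)) with hx
  have hxN : x ^ (ℓ + 1) = N := by
    rw [hx, one_div, ← Nat.cast_succ, Real.rpow_inv_natCast_pow N.cast_nonneg ℓ.succ_ne_zero]
  rcases le_or_gt N ℓ with hNℓ | hℓN
  · have hcard : #(Icc (L + 1) (L + N)) = N := by
      rw [Nat.card_Icc, Nat.add_right_comm, Nat.add_sub_cancel_left]
    have hℓC : (ℓ : ℝ) ≤ 2 ^ (2 * ℓ) * (ℓ ! + 2) := by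
      exact_mod_cast ℓ.self_le_factorial.trans (by nlinarith [Nat.one_le_two_pow (n := 2 * ℓ)])
    have small := sumEnergy_le_mul_of_card_le hℓ0 (fun n ↦ (n ! : ZMod p)) (hcard.trans_le hNℓ)
      (by positivity) (hcard.symm ▸ hxN)
    exact (hcard ▸ small).trans (by gcongr)
  · have hN : (1 : ℝ) ≤ N := by exact_mod_cast (Nat.zero_le ℓ).trans_lt hℓN
    exact sumEnergy_factorial_Icc_le hℓ0 (by omega) hLN (Real.one_le_rpow hN (by positivity)) hxN
end

section
/- Let $p$ be a large prime. Every residue class $\lambda$ modulo $p$ can be represented as $m!\, n! + \sum_{i=1}^{47} n_i! \equiv \lambda \pmod p$ for some positive integers $m, n, n_1, \ldots, n_{47}$ with $\max\{m, n, n_1, \ldots, n_{47}\} \ll p^{1300/1301}$. -/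
open Filter Finset Polynomial

/-! The proof is a form of the circle method over a finite field `F` with `q` elements. Since
`(n + 1 + j)! = (n + 1)! * P j (n + 2)` for the rising factorials `P j`, the factorials form a grid
of values `u n * P j (t n)` with `n < N` and `j < K`, where `P j` is a polynomial of degree `j`.

* Moments: Hölder's inequality in `n` reduces the `2 * l`-th moment of the exponential sum over the
  grid to counting solutions of `∑ i, P (j i) (t n) = ∑ i, P (j' i) (t n)`. If the two sums agree
  as polynomials, then `j'` is a permutation of `j`; otherwise fewer than `K` nodes `t n` satisfy
  the equation. Relative to the trivial bound, the moment is at most `δ = q * (l! / K ^ l + K / N)`.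
* Let `S₁` and `S₃` be the sums over the grids with `K = K₁` and `K = K₃`, and let `x` run through
  the grid with `K = K₂`. If some `c` is not represented with `k ≥ 2 * l` summands, then
  `∑ a, ∑ x, ‖S₁ a‖ ^ k * ‖S₃ (a * x)‖` over the nonzero frequencies `a` is at least as large as the
  trivial bound at one frequency. But the products `a * x` hit no point of `F` often: distinct pairs
  `(a, j)`, `(a', j')` collide for fewer than `K₂` nodes, as `a * P j - a' * P j'` is a nonzero
  polynomial. By Hölder's inequality the sum is controlled by this collision energy and the fourth
  moment `β` of `S₃`, which gives the contradiction once `δ ^ 3 * β * (1 + K₂ ^ 2 * δ / N) < K₂`.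

With `N = q ^ θ`, the best choices are `K₁ = q ^ (θ / (l + 1))`, `K₃ = q ^ (θ / 3)` and `K₂` with
`K₂ ^ 2 * δ = N`; the condition then becomes `27 * (l + 1) < 7 * (4 * l + 1) * θ`.
-/

namespace FactorialSums

section ExpSum

variable {R ι κ : Type*} [CommRing R] [Fintype ι] [Fintype κ]

/-- The exponential sum over the values of the family `g`, at the frequency `a`. -/
noncomputable def expSum (ψ : AddChar R ℂ) (g : ι → R) (a : R) : ℂ :=
  ∑ i, ψ (a * g i)

variable {ψ : AddChar R ℂ}

lemma expSum_zero (g : ι → R) : expSum ψ g 0 = Fintype.card ι := by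
  simp [expSum]

lemma norm_expSum_le [Finite R] (g : ι → R) (a : R) : ‖expSum ψ g a‖ ≤ Fintype.card ι :=
  (norm_sum_le _ _).trans_eq (by simp)

lemma expSum_prod (g : ι × κ → R) (a : R) :
    expSum ψ g a = ∑ i, expSum ψ (fun j ↦ g (i, j)) a :=
  Fintype.sum_prod_type _

lemma expSum_mul_expSum (g : ι → R) (h : κ → R) (a : R) :
    expSum ψ g a * expSum ψ h a = expSum ψ (fun x : ι × κ ↦ g x.1 + h x.2) a := by
  simp only [expSum, Fintype.sum_mul_sum, Fintype.sum_prod_type, mul_add, ψ.map_add_eq_mul]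

lemma expSum_pow (g : ι → R) (a : R) (l : ℕ) :
    expSum ψ g a ^ l = expSum ψ (fun q : Fin l → ι ↦ ∑ i, g (q i)) a := by
  have map_sum (q : Fin l → ι) : ψ (∑ i, a * g (q i)) = ∏ i, ψ (a * g (q i)) :=
    map_prod ψ.toMonoidHom (fun i ↦ Multiplicative.ofAdd (a * g (q i))) univ
  simp only [expSum, Fintype.sum_pow, mul_sum, map_sum]

lemma conj_expSum [Finite R] (g : ι → R) (a : R) :
    starRingEnd ℂ (expSum ψ g a) = expSum ψ (fun i ↦ -g i) a := by
  simp only [expSum, map_sum, mul_neg, ψ.map_neg_eq_conj]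

lemma norm_expSum_sub_const [Finite R] (g : ι → R) (c a : R) :
    ‖expSum ψ (fun i ↦ g i - c) a‖ = ‖expSum ψ g a‖ := by
  simp only [expSum, sub_eq_add_neg, mul_add, ψ.map_add_eq_mul, ← sum_mul, norm_mul,
    AddChar.norm_apply, mul_one]

variable [Fintype R] [DecidableEq R]

lemma sum_expSum (hψ : ψ.IsPrimitive) (g : ι → R) :
    ∑ a, expSum ψ g a = Fintype.card R * #{i | g i = 0} := by
  simp only [expSum]
  rw [sum_comm]
  simp only [AddChar.sum_mulShift _ hψ]
  rw [← Nat.cast_sum, ← sum_filter, sum_const, smul_eq_mul, mul_comm, Nat.cast_mul]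

lemma sum_norm_expSum_pow (hψ : ψ.IsPrimitive) (g : ι → R) (l : ℕ) :
    ∑ a, ‖expSum ψ g a‖ ^ (2 * l) =
      Fintype.card R *
        #{q : (Fin l → ι) × (Fin l → ι) | ∑ i, g (q.1 i) = ∑ i, g (q.2 i)} := by
  have norm_pow_eq (a : R) : (‖expSum ψ g a‖ ^ (2 * l) : ℂ) =
      expSum ψ (fun q : (Fin l → ι) × (Fin l → ι) ↦
        ∑ i, g (q.1 i) + -∑ i, g (q.2 i)) a := by
    rw [pow_mul, ← Complex.mul_conj', mul_pow, ← map_pow, expSum_pow, conj_expSum,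
      expSum_mul_expSum]
  have sum_eq : ((∑ a, ‖expSum ψ g a‖ ^ (2 * l) : ℝ) : ℂ) = Fintype.card R *
      #{q : (Fin l → ι) × (Fin l → ι) | ∑ i, g (q.1 i) = ∑ i, g (q.2 i)} := by
    push_cast
    simp only [norm_pow_eq, sum_expSum hψ, ← sub_eq_add_neg, sub_eq_zero]
  exact_mod_cast sum_eq

end ExpSum

section Representation

variable {F : Type*} [Field F] [Fintype F] [DecidableEq F]

lemma sum_eq_zero_add_sum_units {M : Type*} [AddCommMonoid M] (f : F → M) :
    ∑ a, f a = f 0 + ∑ a : Fˣ, f a := by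
  rw [← add_sum_erase _ _ (mem_univ 0), ← unitsEquivNeZero.symm.sum_comp]
  congr 1
  exact (sum_subtype _ (by simp) f)

variable {ψ : AddChar F ℂ}

lemma sum_units_norm_expSum_pow_le {κ : Type*} [Fintype κ] (g : κ → F) {k m : ℕ} (hmk : m ≤ k) :
    ∑ a : Fˣ, ‖expSum ψ g a‖ ^ k ≤ (Fintype.card κ : ℝ) ^ (k - m) * ∑ a, ‖expSum ψ g a‖ ^ m := by
  rw [sum_eq_zero_add_sum_units (fun a ↦ ‖expSum ψ g a‖ ^ m), mul_add, mul_sum]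
  refine le_add_of_nonneg_of_le (by positivity) (sum_le_sum fun a _ ↦ ?_)
  rw [← pow_sub_mul_pow _ hmk]
  gcongr
  exact norm_expSum_le g a

lemma card_le_sum_units_norm_expSum {ι : Type*} [Fintype ι] (hψ : ψ.IsPrimitive) {f : ι → F}
    {c : F} (hf : ∀ i, f i ≠ c) : (Fintype.card ι : ℝ) ≤ ∑ a : Fˣ, ‖expSum ψ f a‖ := by
  have sum_eq_zero : ∑ a, expSum ψ (fun i ↦ f i - c) a = 0 := by
    simp [sum_expSum hψ, sub_eq_zero, hf]
  rw [sum_eq_zero_add_sum_units, expSum_zero, add_eq_zero_iff_eq_neg] at sum_eq_zero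
  calc (Fintype.card ι : ℝ) = ‖∑ a : Fˣ, expSum ψ (fun i ↦ f i - c) a‖ := by
        rw [← norm_neg, ← sum_eq_zero, Complex.norm_natCast]
    _ ≤ ∑ a : Fˣ, ‖expSum ψ f a‖ :=
        (norm_sum_le _ _).trans_eq (by simp only [norm_expSum_sub_const])

lemma card_mul_card_mul_card_pow_le {κ₁ κ₂ κ₃ : Type*} [Fintype κ₁] [Fintype κ₂] [Fintype κ₃]
    {k : ℕ} (hψ : ψ.IsPrimitive) {g₁ : κ₁ → F} {g₂ : κ₂ → F} {g₃ : κ₃ → F} {c : F}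
    (hc : ∀ x y (z : Fin k → κ₁), g₂ x * g₃ y + ∑ i, g₁ (z i) ≠ c) :
    (Fintype.card κ₂ * Fintype.card κ₃ * Fintype.card κ₁ ^ k : ℝ) ≤
      ∑ a : Fˣ, ∑ x, ‖expSum ψ g₁ a‖ ^ k * ‖expSum ψ g₃ (a * g₂ x)‖ := by
  have card_le := card_le_sum_units_norm_expSum hψ
    (f := fun q : (κ₂ × κ₃) × (Fin k → κ₁) ↦ g₂ q.1.1 * g₃ q.1.2 + ∑ i, g₁ (q.2 i))
    (fun q ↦ hc q.1.1 q.1.2 q.2)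
  simp only [Fintype.card_prod, Fintype.card_fun, Fintype.card_fin, Nat.cast_mul,
    Nat.cast_pow] at card_le
  refine card_le.trans (sum_le_sum fun a _ ↦ ?_)
  rw [← expSum_mul_expSum (fun x : κ₂ × κ₃ ↦ g₂ x.1 * g₃ x.2)
    (fun z : Fin k → κ₁ ↦ ∑ i, g₁ (z i)), ← expSum_pow, norm_mul, norm_pow,
    mul_comm, ← mul_sum, expSum_prod]
  gcongr
  refine (norm_sum_le _ _).trans_eq (sum_congr rfl fun x _ ↦ ?_)
  simp only [expSum, mul_assoc]

end Representation

section CollisionEnergy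

variable {ι Ω R : Type*} [Fintype ι] [Fintype Ω] [Fintype R] [DecidableEq R]

/-- The weighted number of coincidences `φ x = φ x'`, written as the sum of the squared weights of
the fibres of `φ`. -/
def collisionEnergy (w : Ω → ℝ) (φ : Ω → R) : ℝ :=
  ∑ y, (∑ x with φ x = y, w x) ^ 2

lemma collisionEnergy_eq_sum_sum (w : Ω → ℝ) (φ : Ω → R) :
    collisionEnergy w φ = ∑ x, ∑ x', if φ x = φ x' then w x * w x' else 0 := by
  simp only [collisionEnergy, sq, sum_mul_sum, sum_filter]
  rw [sum_comm]
  refine sum_congr rfl fun x _ ↦ ?_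
  rw [sum_comm]
  simp [eq_comm]

lemma sum_mul_comp_pow_four_le {w : Ω → ℝ} (hw : ∀ x, 0 ≤ w x) (φ : Ω → R) (G : R → ℝ) :
    (∑ x, w x * G (φ x)) ^ 4 ≤ (∑ x, w x) ^ 2 * collisionEnergy w φ * ∑ y, G y ^ 4 := by
  have sq_le : (∑ x, w x * G (φ x)) ^ 2 ≤ (∑ x, w x) * ∑ x, w x * G (φ x) ^ 2 :=
    sum_sq_le_sum_mul_sum_of_sq_le_mul _ (fun x _ ↦ hw x)
      (fun x _ ↦ mul_nonneg (hw x) (sq_nonneg _)) (fun x _ ↦ le_of_eq (by ring))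
  have sum_fiber : ∑ x, w x * G (φ x) ^ 2 = ∑ y, (∑ x with φ x = y, w x) * G y ^ 2 := by
    rw [← sum_fiberwise _ φ]
    refine sum_congr rfl fun y _ ↦ ?_
    rw [sum_mul]
    exact sum_congr rfl fun x hx ↦ by rw [(mem_filter.mp hx).2]
  have sq_sum_fiber_le :
      (∑ x, w x * G (φ x) ^ 2) ^ 2 ≤ collisionEnergy w φ * ∑ y, G y ^ 4 := by
    rw [sum_fiber]
    exact (sum_mul_sq_le_sq_mul_sq _ _ _).trans_eq (by simp only [collisionEnergy, ← pow_mul])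
  calc (∑ x, w x * G (φ x)) ^ 4 = ((∑ x, w x * G (φ x)) ^ 2) ^ 2 := by ring
    _ ≤ ((∑ x, w x) * ∑ x, w x * G (φ x) ^ 2) ^ 2 := by gcongr
    _ = (∑ x, w x) ^ 2 * (∑ x, w x * G (φ x) ^ 2) ^ 2 := by ring
    _ ≤ (∑ x, w x) ^ 2 * (collisionEnergy w φ * ∑ y, G y ^ 4) := by gcongr
    _ = _ := by ring

lemma collisionEnergy_prod_le (w : ι × Ω → ℝ) (φ : ι × Ω → R) :
    collisionEnergy w φ ≤
      Fintype.card ι * ∑ i, collisionEnergy (fun x ↦ w (i, x)) (fun x ↦ φ (i, x)) := by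
  simp only [collisionEnergy]
  rw [sum_comm, mul_sum]
  refine sum_le_sum fun y _ ↦ ?_
  simp only [sum_filter, Fintype.sum_prod_type]
  exact sq_sum_le_card_mul_sum_sq

lemma collisionEnergy_prod_le_of_card_le {w : Ω → ℝ} (hw : ∀ x, 0 ≤ w x) {φ : ι × Ω → R} {B : ℕ}
    (hφ : ∀ x x', x ≠ x' → #{i | φ (i, x) = φ (i, x')} ≤ B) :
    collisionEnergy (fun q : ι × Ω ↦ w q.2) φ ≤
      Fintype.card ι * (Fintype.card ι * ∑ x, w x ^ 2 + B * (∑ x, w x) ^ 2) := by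
  classical
  refine (collisionEnergy_prod_le _ _).trans ?_
  gcongr
  have card_mul_le (x x' : Ω) : #{i | φ (i, x) = φ (i, x')} * (w x * w x') ≤
      (if x = x' then Fintype.card ι * (w x * w x') else 0) + B * (w x * w x') := by
    have := mul_nonneg (hw x) (hw x')
    split_ifs with h
    · subst h
      simpa using mul_nonneg B.cast_nonneg this
    · rw [zero_add]
      gcongr
      exact hφ x x' h
  calc ∑ i, collisionEnergy w (fun x ↦ φ (i, x))
      = ∑ x, ∑ x', #{i | φ (i, x) = φ (i, x')} * (w x * w x') := by
        simp only [collisionEnergy_eq_sum_sum]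
        rw [sum_comm]
        refine sum_congr rfl fun x _ ↦ ?_
        rw [sum_comm]
        refine sum_congr rfl fun x' _ ↦ ?_
        rw [← sum_filter, sum_const, nsmul_eq_mul]
    _ ≤ ∑ x, ∑ x', ((if x = x' then Fintype.card ι * (w x * w x') else 0) + B * (w x * w x')) :=
        sum_le_sum fun x _ ↦ sum_le_sum fun x' _ ↦ card_mul_le x x'
    _ = Fintype.card ι * ∑ x, w x ^ 2 + B * (∑ x, w x) ^ 2 := by
        simp [sum_add_distrib, ← mul_sum, ← sum_mul, sq]

end CollisionEnergy

section EqualSums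

lemma exists_perm_of_sum_eq {R M κ ι : Type*} [Ring R] [AddCommMonoid M] [Module R M] [Fintype ι]
    {p : ℕ} [CharP R p] {v : κ → M} (hv : LinearIndependent R v) (hι : Fintype.card ι < p)
    {f g : ι → κ} (h : ∑ i, v (f i) = ∑ i, v (g i)) : ∃ σ : Equiv.Perm ι, f = g ∘ σ := by
  classical
  have single_sum_eq : ∑ i, Finsupp.single (f i) (1 : R) = ∑ i, Finsupp.single (g i) 1 :=
    hv (by simpa using h)
  have card_fiber_lt (e : ι → κ) (k : κ) : #{i | e i = k} ∈ Set.Iio p :=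
    (card_le_univ _).trans_lt hι
  have card_fiber_eq (k : κ) : #{i | f i = k} = #{i | g i = k} :=
    CharP.natCast_injOn_Iio R p (card_fiber_lt f k) (card_fiber_lt g k)
      (by simpa [Finsupp.finsetSum_apply, Finsupp.single_apply] using
        DFunLike.congr_fun single_sum_eq k)
  have fiberEquiv (k : κ) : Nonempty ({i // f i = k} ≃ {i // g i = k}) := by
    simpa [← Fintype.card_eq, Fintype.card_subtype] using card_fiber_eq k
  exact ⟨Equiv.ofFiberEquiv fun k ↦ (fiberEquiv k).some,
    funext fun i ↦ (Equiv.ofFiberEquiv_map _ i).symm⟩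

lemma card_sum_eq_sum_le {R M κ ι : Type*} [Ring R] [AddCommMonoid M] [Module R M] [DecidableEq M]
    [Fintype κ] [Fintype ι] [DecidableEq ι] {p : ℕ} [CharP R p] {v : κ → M}
    (hv : LinearIndependent R v) (hι : Fintype.card ι < p) :
    #{q : (ι → κ) × (ι → κ) | ∑ i, v (q.1 i) = ∑ i, v (q.2 i)} ≤
      (Fintype.card ι).factorial * Fintype.card κ ^ Fintype.card ι := by
  classical
  let rearrange (r : Equiv.Perm ι × (ι → κ)) : (ι → κ) × (ι → κ) := (r.2 ∘ r.1, r.2)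
  calc #{q : (ι → κ) × (ι → κ) | ∑ i, v (q.1 i) = ∑ i, v (q.2 i)}
      ≤ #(univ.image rearrange) := by
        refine card_le_card fun q hq ↦ ?_
        obtain ⟨σ, hσ⟩ := exists_perm_of_sum_eq hv hι (mem_filter.mp hq).2
        exact mem_image.mpr ⟨(σ, q.2), mem_univ _, Prod.ext hσ.symm rfl⟩
    _ ≤ _ := card_image_le.trans_eq (by simp [Fintype.card_perm])

end EqualSums

section PolyGrid

variable {F ι : Type*} [Field F]

/-- The values `u n * P j (t n)`, for `n` in `ι` and `j < K`, of a sequence of polynomials `P j` of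
degree `j`, with scaling factors `u n` and nodes `t n`. -/
def polyGrid (P : Sequence F) (u t : ι → F) (K : ℕ) (x : ι × Fin K) : F :=
  u x.1 * (P x.2).eval (t x.1)

variable (P : Sequence F) {u t : ι → F}

lemma sum_polyGrid_eq_iff (hu : ∀ n, u n ≠ 0) {K l : ℕ} (n : ι)
    (q : (Fin l → Fin K) × (Fin l → Fin K)) :
    ∑ i, polyGrid P u t K (n, q.1 i) = ∑ i, polyGrid P u t K (n, q.2 i) ↔
      (∑ i, P (q.1 i) - ∑ i, P (q.2 i)).eval (t n) = 0 := by
  simp only [polyGrid, ← mul_sum, mul_right_inj' (hu n), eval_sub, eval_finsetSum, sub_eq_zero]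

variable [Fintype ι] [DecidableEq F]

lemma card_filter_eval_eq_zero_le {t : ι → F} (ht : t.Injective) {f : F[X]}
    (hf : f ≠ 0) : #{n | f.eval (t n) = 0} ≤ f.natDegree := by
  rw [← card_image_of_injective _ ht]
  refine card_le_degree_of_subset_roots fun x hx ↦ ?_
  obtain ⟨n, hn, rfl⟩ := mem_image.mp hx
  exact (mem_roots hf).mpr (mem_filter.mp hn).2

lemma sum_card_sum_polyGrid_eq_le {p : ℕ} [CharP F p] (hu : ∀ n, u n ≠ 0) (ht : t.Injective)
    {l : ℕ} (hl : l < p) (K : ℕ) :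
    ∑ n, #{q : (Fin l → Fin K) × (Fin l → Fin K) |
        ∑ i, polyGrid P u t K (n, q.1 i) = ∑ i, polyGrid P u t K (n, q.2 i)} ≤
      Fintype.card ι * (l.factorial * K ^ l) + K ^ (2 * l + 1) := by
  classical
  have natDegree_sum_le (q : Fin l → Fin K) : (∑ i, P (q i)).natDegree ≤ K :=
    natDegree_sum_le_of_forall_le _ _ fun i _ ↦ by simp
  have card_nodes_le (q : (Fin l → Fin K) × (Fin l → Fin K)) :
      #{n | (∑ i, P (q.1 i) - ∑ i, P (q.2 i)).eval (t n) = 0} ≤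
        (if ∑ i, P (q.1 i) = ∑ i, P (q.2 i) then Fintype.card ι else 0) + K := by
    split_ifs with h
    · exact le_add_right (card_le_univ _)
    · rw [zero_add]
      exact (card_filter_eval_eq_zero_le ht (sub_ne_zero.mpr h)).trans <|
        (natDegree_sub_le _ _).trans (max_le (natDegree_sum_le _) (natDegree_sum_le _))
  have card_equal_sums_le :
      #{q : (Fin l → Fin K) × (Fin l → Fin K) | ∑ i, P (q.1 i) = ∑ i, P (q.2 i)} ≤
        l.factorial * K ^ l := by
    simpa using card_sum_eq_sum_le (ι := Fin l)
      (P.linearIndependent.comp _ (Fin.val_injective (n := K))) (by simpa using hl)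
  simp only [sum_polyGrid_eq_iff P hu, card_filter]
  rw [sum_comm]
  simp only [← card_filter]
  calc ∑ q : (Fin l → Fin K) × (Fin l → Fin K),
        #{n | (∑ i, P (q.1 i) - ∑ i, P (q.2 i)).eval (t n) = 0}
      ≤ ∑ q : (Fin l → Fin K) × (Fin l → Fin K),
          ((if ∑ i, P (q.1 i) = ∑ i, P (q.2 i) then Fintype.card ι else 0) + K) :=
        sum_le_sum fun q _ ↦ card_nodes_le q
    _ = Fintype.card ι * #{q : (Fin l → Fin K) × (Fin l → Fin K) |
          ∑ i, P (q.1 i) = ∑ i, P (q.2 i)} + K ^ (2 * l + 1) := by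
        rw [sum_add_distrib, ← sum_filter, sum_const, sum_const, smul_eq_mul, smul_eq_mul,
          mul_comm, card_univ, Fintype.card_prod, Fintype.card_fun, Fintype.card_fin,
          Fintype.card_fin]
        ring
    _ ≤ _ := by gcongr

lemma card_filter_smul_polyGrid_eq_le (hu : ∀ n, u n ≠ 0) (ht : t.Injective) {K : ℕ}
    {r s : Fin K × Fˣ} (hrs : r ≠ s) :
    #{n | (r.2 * polyGrid P u t K (n, r.1) : F) = s.2 * polyGrid P u t K (n, s.1)} ≤ K := by
  let f (r : Fin K × Fˣ) : F[X] := C (r.2 : F) * P r.1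
  have natDegree_f (r : Fin K × Fˣ) : (f r).natDegree = r.1 := by
    rw [natDegree_C_mul r.2.ne_zero, P.natDegree_eq]
  have f_ne : f r ≠ f s := by
    intro h
    have index_eq : r.1 = s.1 := Fin.ext (by rw [← natDegree_f, h, natDegree_f])
    refine hrs (Prod.ext index_eq (Units.ext ?_))
    simp only [f, index_eq] at h
    exact C_injective (mul_right_cancel₀ (P.ne_zero _) h)
  have collision_iff (n : ι) :
      (r.2 * polyGrid P u t K (n, r.1) : F) = s.2 * polyGrid P u t K (n, s.1) ↔
        (f r - f s).eval (t n) = 0 := by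
    simp only [polyGrid, f, eval_sub, eval_mul, eval_C, sub_eq_zero, mul_left_comm _ (u n),
      mul_right_inj' (hu n)]
  simp only [collision_iff]
  refine (card_filter_eval_eq_zero_le ht (sub_ne_zero.mpr f_ne)).trans <|
    (natDegree_sub_le _ _).trans (max_le ?_ ?_)
  · exact (natDegree_f r).trans_le r.1.is_lt.le
  · exact (natDegree_f s).trans_le s.1.is_lt.le

variable [Fintype F]

lemma sum_mul_comp_smul_polyGrid_pow_four_le (hu : ∀ n, u n ≠ 0) (ht : t.Injective) (K : ℕ)
    {w : Fˣ → ℝ} (hw : ∀ a, 0 ≤ w a) (G : F → ℝ) :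
    (∑ a : Fˣ, ∑ x, w a * G (a * polyGrid P u t K x)) ^ 4 ≤
      (Fintype.card ι * K * ∑ a, w a) ^ 2 *
        (Fintype.card ι * (Fintype.card ι * K * ∑ a, w a ^ 2 + K ^ 3 * (∑ a, w a) ^ 2)) *
          ∑ y, G y ^ 4 := by
  let φ (q : ι × Fin K × Fˣ) : F := q.2.2 * polyGrid P u t K (q.1, q.2.1)
  have energy_le := collisionEnergy_prod_le_of_card_le (w := fun r : Fin K × Fˣ ↦ w r.2)
    (fun r ↦ hw r.2) (φ := φ) fun _ _ hrs ↦ card_filter_smul_polyGrid_eq_le P hu ht hrs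
  have sum_eq : ∑ a : Fˣ, ∑ x, w a * G (a * polyGrid P u t K x) = ∑ q, w q.2.2 * G (φ q) := by
    simp only [Fintype.sum_prod_type]
    rw [sum_comm]
    exact sum_congr rfl fun n _ ↦ sum_comm
  rw [sum_eq]
  refine (sum_mul_comp_pow_four_le (fun q : ι × Fin K × Fˣ ↦ hw q.2.2) φ G).trans ?_
  have sum_weight : ∑ q : ι × Fin K × Fˣ, w q.2.2 = Fintype.card ι * K * ∑ a, w a := by
    simp [Fintype.sum_prod_type, mul_assoc]
  rw [sum_weight]
  gcongr
  refine energy_le.trans_eq ?_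
  simp only [Fintype.sum_prod_type, sum_const, card_univ, Fintype.card_fin, nsmul_eq_mul]
  ring

omit [DecidableEq F] in
lemma card_mul_sum_norm_expSum_polyGrid_pow_le {p : ℕ} [CharP F p] {ψ : AddChar F ℂ}
    (hψ : ψ.IsPrimitive) (hu : ∀ n, u n ≠ 0) (ht : t.Injective) {l : ℕ} (hl : l < p) (K : ℕ) :
    Fintype.card ι * ∑ a, ‖expSum ψ (polyGrid P u t K) a‖ ^ (2 * l) ≤
      Fintype.card F * (Fintype.card ι : ℝ) ^ (2 * l) *
        (Fintype.card ι * (l.factorial * K ^ l) + K ^ (2 * l + 1)) := by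
  classical
  have holder (a : F) : Fintype.card ι * ‖expSum ψ (polyGrid P u t K) a‖ ^ (2 * l) ≤
      (Fintype.card ι : ℝ) ^ (2 * l) *
        ∑ n, ‖expSum ψ (fun j ↦ polyGrid P u t K (n, j)) a‖ ^ (2 * l) := by
    rw [expSum_prod]
    rcases Nat.eq_zero_or_pos (2 * l) with h | h
    · simp [h]
    obtain ⟨m, hm⟩ := Nat.exists_eq_add_of_lt h
    rw [hm, zero_add, pow_succ' (Fintype.card ι : ℝ), mul_assoc]
    gcongr
    exact (pow_le_pow_left₀ (norm_nonneg _) (norm_sum_le _ _) _).trans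
      (pow_sum_le_card_mul_sum_pow (fun _ _ ↦ norm_nonneg _) m)
  calc Fintype.card ι * ∑ a, ‖expSum ψ (polyGrid P u t K) a‖ ^ (2 * l)
      ≤ ∑ a, (Fintype.card ι : ℝ) ^ (2 * l) *
          ∑ n, ‖expSum ψ (fun j ↦ polyGrid P u t K (n, j)) a‖ ^ (2 * l) := by
        rw [mul_sum]
        exact sum_le_sum fun a _ ↦ holder a
    _ = Fintype.card F * (Fintype.card ι : ℝ) ^ (2 * l) *
          ∑ n, #{q : (Fin l → Fin K) × (Fin l → Fin K) |
            ∑ i, polyGrid P u t K (n, q.1 i) = ∑ i, polyGrid P u t K (n, q.2 i)} := by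
        rw [← mul_sum, sum_comm]
        simp only [sum_norm_expSum_pow hψ, ← mul_sum]
        push_cast
        ring
    _ ≤ _ := by
        gcongr
        exact_mod_cast sum_card_sum_polyGrid_eq_le P hu ht hl K

end PolyGrid

section GridMoment

variable {F ι : Type*} [Field F] [Fintype F] [Fintype ι]

/-- A bound for the `2 * l`-th moment over all frequencies of the exponential sum of a polynomial
grid with `N` nodes and `K` polynomials over a field with `q` elements, when the sum is divided by
its number `N * K` of terms. -/
noncomputable def gridMoment (q N K : ℝ) (l : ℕ) : ℝ :=
  q * (l.factorial / K ^ l + K / N)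

variable (P : Sequence F) {u t : ι → F} {ψ : AddChar F ℂ}

lemma sum_norm_expSum_polyGrid_pow_le [Nonempty ι] {p : ℕ} [CharP F p] (hψ : ψ.IsPrimitive)
    (hu : ∀ n, u n ≠ 0) (ht : t.Injective) {l : ℕ} (hl : l < p) {K : ℕ} (hK : 0 < K) :
    ∑ a, ‖expSum ψ (polyGrid P u t K) a‖ ^ (2 * l) ≤
      gridMoment (Fintype.card F) (Fintype.card ι) K l * (Fintype.card ι * K) ^ (2 * l) := by
  have card_pos : (0 : ℝ) < Fintype.card ι := by exact_mod_cast Fintype.card_pos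
  have : (0 : ℝ) < K := by exact_mod_cast hK
  refine le_of_mul_le_mul_left ?_ card_pos
  refine (card_mul_sum_norm_expSum_polyGrid_pow_le P hψ hu ht hl K).trans_eq ?_
  simp only [gridMoment]
  field_simp
  ring

variable [DecidableEq F]

lemma sum_units_norm_expSum_polyGrid_pow_le [Nonempty ι] {p : ℕ} [CharP F p]
    (hψ : ψ.IsPrimitive) (hu : ∀ n, u n ≠ 0) (ht : t.Injective) {k l : ℕ} (hl : l < p)
    (hlk : 2 * l ≤ k) {K : ℕ} (hK : 0 < K) :
    ∑ a : Fˣ, ‖expSum ψ (polyGrid P u t K) a‖ ^ k ≤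
      gridMoment (Fintype.card F) (Fintype.card ι) K l * (Fintype.card ι * K) ^ k := by
  calc ∑ a : Fˣ, ‖expSum ψ (polyGrid P u t K) a‖ ^ k
      ≤ (Fintype.card ι * K : ℝ) ^ (k - 2 * l) *
          ∑ a, ‖expSum ψ (polyGrid P u t K) a‖ ^ (2 * l) := by
        simpa using sum_units_norm_expSum_pow_le (ψ := ψ) (polyGrid P u t K) hlk
    _ ≤ (Fintype.card ι * K : ℝ) ^ (k - 2 * l) *
          (gridMoment (Fintype.card F) (Fintype.card ι) K l * (Fintype.card ι * K) ^ (2 * l)) := by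
        gcongr
        exact sum_norm_expSum_polyGrid_pow_le P hψ hu ht hl hK
    _ = _ := by rw [mul_left_comm, pow_sub_mul_pow _ hlk]

lemma sum_mul_comp_smul_polyGrid_pow_four_le_of_le [Nonempty ι] (hu : ∀ n, u n ≠ 0)
    (ht : t.Injective) {K : ℕ} (hK : 0 < K) {w : Fˣ → ℝ} (hw : ∀ a, 0 ≤ w a) {A δ : ℝ}
    (hA : ∀ a, w a ≤ A) (hδ : ∑ a, w a ≤ δ * A) (G : F → ℝ) :
    (∑ a : Fˣ, ∑ x, w a * G (a * polyGrid P u t K x)) ^ 4 ≤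
      (Fintype.card ι * K * A) ^ 4 * (δ ^ 3 * (1 + K ^ 2 * δ / Fintype.card ι) / K) *
        ∑ y, G y ^ 4 := by
  have : (0 : ℝ) < Fintype.card ι := by exact_mod_cast Fintype.card_pos
  have : (0 : ℝ) < K := by exact_mod_cast hK
  have sum_nonneg : 0 ≤ ∑ a, w a := sum_nonneg fun a _ ↦ hw a
  have sum_sq_le : ∑ a, w a ^ 2 ≤ A * (δ * A) :=
    calc ∑ a, w a ^ 2 ≤ ∑ a, A * w a := sum_le_sum fun a _ ↦ by
          simpa only [sq] using mul_le_mul_of_nonneg_right (hA a) (hw a)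
      _ = A * ∑ a, w a := (mul_sum ..).symm
      _ ≤ A * (δ * A) := mul_le_mul_of_nonneg_left hδ ((hw 1).trans (hA 1))
  calc _ ≤ (Fintype.card ι * K * ∑ a, w a) ^ 2 *
          (Fintype.card ι * (Fintype.card ι * K * ∑ a, w a ^ 2 + K ^ 3 * (∑ a, w a) ^ 2)) *
            ∑ y, G y ^ 4 :=
        sum_mul_comp_smul_polyGrid_pow_four_le P hu ht K hw G
    _ ≤ (Fintype.card ι * K * (δ * A)) ^ 2 *
          (Fintype.card ι * (Fintype.card ι * K * (A * (δ * A)) + K ^ 3 * (δ * A) ^ 2)) *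
            ∑ y, G y ^ 4 := by
        gcongr
    _ = _ := by
        field_simp

variable [Nonempty ι] {p : ℕ} [CharP F p]

lemma sum_units_polyGrid_pow_four_le (hψ : ψ.IsPrimitive) (hu : ∀ n, u n ≠ 0) (ht : t.Injective)
    {k l : ℕ} (hl : l < p) (hp : 2 < p) (hlk : 2 * l ≤ k) {K₁ K₂ K₃ : ℕ} (hK₁ : 0 < K₁)
    (hK₂ : 0 < K₂) (hK₃ : 0 < K₃) {δ β : ℝ}
    (hδ : gridMoment (Fintype.card F) (Fintype.card ι) K₁ l ≤ δ)
    (hβ : gridMoment (Fintype.card F) (Fintype.card ι) K₃ 2 ≤ β) :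
    (∑ a : Fˣ, ∑ x, ‖expSum ψ (polyGrid P u t K₁) a‖ ^ k *
        ‖expSum ψ (polyGrid P u t K₃) (a * polyGrid P u t K₂ x)‖) ^ 4 ≤
      (Fintype.card ι * K₂ * (Fintype.card ι * K₁) ^ k) ^ 4 *
        (δ ^ 3 * (1 + K₂ ^ 2 * δ / Fintype.card ι) / K₂) *
          (β * (Fintype.card ι * K₃) ^ 4) := by
  have δ_nonneg : 0 ≤ δ := le_trans (by unfold gridMoment; positivity) hδ
  have weight_le (a : Fˣ) :
      ‖expSum ψ (polyGrid P u t K₁) a‖ ^ k ≤ (Fintype.card ι * K₁ : ℝ) ^ k :=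
    pow_le_pow_left₀ (norm_nonneg _) ((norm_expSum_le _ _).trans_eq (by simp)) k
  have sum_weight_le : ∑ a : Fˣ, ‖expSum ψ (polyGrid P u t K₁) a‖ ^ k ≤
      δ * (Fintype.card ι * K₁) ^ k :=
    (sum_units_norm_expSum_polyGrid_pow_le P hψ hu ht hl hlk hK₁).trans <|
      mul_le_mul_of_nonneg_right hδ (by positivity)
  refine (sum_mul_comp_smul_polyGrid_pow_four_le_of_le P hu ht hK₂ (fun a ↦ by positivity)
    weight_le sum_weight_le (fun y ↦ ‖expSum ψ (polyGrid P u t K₃) y‖)).trans ?_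
  refine mul_le_mul_of_nonneg_left ?_ (by positivity)
  exact (sum_norm_expSum_polyGrid_pow_le P hψ hu ht hp hK₃).trans <|
    mul_le_mul_of_nonneg_right hβ (by positivity)

omit [DecidableEq F] in
theorem exists_polyGrid_mul_add_sum_eq (hψ : ψ.IsPrimitive) (hu : ∀ n, u n ≠ 0) (ht : t.Injective)
    {k l : ℕ} (hl : l < p) (hp : 2 < p) (hlk : 2 * l ≤ k) {K₁ K₂ K₃ : ℕ} (hK₁ : 0 < K₁)
    (hK₂ : 0 < K₂) (hK₃ : 0 < K₃) {δ β : ℝ}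
    (hδ : gridMoment (Fintype.card F) (Fintype.card ι) K₁ l ≤ δ)
    (hβ : gridMoment (Fintype.card F) (Fintype.card ι) K₃ 2 ≤ β)
    (hδβ : δ ^ 3 * β * (1 + K₂ ^ 2 * δ / Fintype.card ι) < K₂) (c : F) :
    ∃ x y, ∃ z : Fin k → ι × Fin K₁,
      polyGrid P u t K₂ x * polyGrid P u t K₃ y + ∑ i, polyGrid P u t K₁ (z i) = c := by
  classical
  by_contra! hc
  have card_le := card_mul_card_mul_card_pow_le hψ hc
  simp only [Fintype.card_prod, Fintype.card_fin, Nat.cast_mul] at card_le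
  have four_le := (pow_le_pow_left₀ (by positivity) card_le 4).trans <|
    sum_units_polyGrid_pow_four_le P hψ hu ht hl hp hlk hK₁ hK₂ hK₃ hδ hβ
  have card_pos : (0 : ℝ) < Fintype.card ι := by exact_mod_cast Fintype.card_pos
  have : (0 : ℝ) < K₁ := by exact_mod_cast hK₁
  have K₂_pos : (0 : ℝ) < K₂ := by exact_mod_cast hK₂
  have : (0 : ℝ) < K₃ := by exact_mod_cast hK₃
  set N := (Fintype.card ι : ℝ)
  refine four_le.not_gt ?_
  calc (N * K₂ * (N * K₁) ^ k) ^ 4 * (δ ^ 3 * (1 + K₂ ^ 2 * δ / N) / K₂) * (β * (N * K₃) ^ 4)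
      = (N * K₂ * (N * K₃) * (N * K₁) ^ k) ^ 4 * (δ ^ 3 * β * (1 + K₂ ^ 2 * δ / N) / K₂) := by ring
    _ < (N * K₂ * (N * K₃) * (N * K₁) ^ k) ^ 4 :=
        mul_lt_of_lt_one_right (by positivity) ((div_lt_one K₂_pos).mpr hδβ)

end GridMoment

section Factorial

/-- The rising factorials `X (X + 1) ⋯ (X + j - 1)`, as a sequence of polynomials of degree `j`. -/
noncomputable def ascPochhammerSequence (R : Type*) [Ring R] [IsDomain R] : Sequence R where
  elems' := ascPochhammer R
  degree_eq' j := by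
    rw [degree_eq_natDegree (monic_ascPochhammer R j).ne_zero, ascPochhammer_natDegree]

lemma polyGrid_ascPochhammerSequence {F : Type*} [Field F] {N K : ℕ} (x : Fin N × Fin K) :
    polyGrid (ascPochhammerSequence F) (fun n : Fin N ↦ (((n : ℕ) + 1).factorial : F))
      (fun n ↦ (((n : ℕ) + 2 : ℕ) : F)) K x = (((x.1 : ℕ) + 1 + x.2).factorial : F) := by
  rw [← Nat.factorial_mul_ascFactorial, Nat.cast_mul, Nat.cast_ascFactorial]
  rfl

variable {p : ℕ} [Fact p.Prime]

lemma cast_factorial_ne_zero {n : ℕ} (hn : n < p) : (n.factorial : ZMod p) ≠ 0 := by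
  rwa [Ne, ZMod.natCast_eq_zero_iff, (Fact.out : p.Prime).dvd_factorial, not_le]

lemma injective_cast_add {N : ℕ} (hN : N ≤ p) (c : ℕ) :
    (fun n : Fin N ↦ (((n : ℕ) + c : ℕ) : ZMod p)).Injective := by
  intro m n h
  have h' : (m : ℕ) ≡ n [MOD p] :=
    Nat.ModEq.add_right_cancel' c ((ZMod.natCast_eq_natCast_iff ..).mp h)
  exact Fin.ext (h'.eq_of_lt_of_lt (m.is_lt.trans_le hN) (n.is_lt.trans_le hN))

theorem exists_factorial_mul_factorial_add_sum_eq {k l : ℕ} (hl : l < p) (hp : 2 < p)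
    (hlk : 2 * l ≤ k) {N K₁ K₂ K₃ : ℕ} (hN : 0 < N) (hNp : N < p) (hK₁ : 0 < K₁) (hK₂ : 0 < K₂)
    (hK₃ : 0 < K₃) {δ β : ℝ} (hδ : gridMoment p N K₁ l ≤ δ) (hβ : gridMoment p N K₃ 2 ≤ β)
    (hδβ : δ ^ 3 * β * (1 + K₂ ^ 2 * δ / N) < K₂) (c : ZMod p) :
    ∃ m ∈ Icc 1 (N + K₂), ∃ n ∈ Icc 1 (N + K₃), ∃ f : Fin k → ℕ, (∀ i, f i ∈ Icc 1 (N + K₁)) ∧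
      (m.factorial : ZMod p) * n.factorial + ∑ i, ((f i).factorial : ZMod p) = c := by
  have : Nonempty (Fin N) := ⟨⟨0, hN⟩⟩
  have scaling_ne_zero (n : Fin N) : (((n : ℕ) + 1).factorial : ZMod p) ≠ 0 :=
    cast_factorial_ne_zero (by omega)
  obtain ⟨x, y, z, h⟩ := exists_polyGrid_mul_add_sum_eq (ascPochhammerSequence (ZMod p))
    (ZMod.isPrimitive_stdAddChar p) scaling_ne_zero (injective_cast_add hNp.le 2) hl hp hlk
    hK₁ hK₂ hK₃ (by simpa using hδ) (by simpa using hβ) (by simpa using hδβ) c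
  simp only [polyGrid_ascPochhammerSequence] at h
  have mem_Icc {K : ℕ} (x : Fin N × Fin K) : (x.1 : ℕ) + 1 + x.2 ∈ Icc 1 (N + K) := by
    rw [Finset.mem_Icc]
    omega
  exact ⟨_, mem_Icc x, _, mem_Icc y, _, fun i ↦ mem_Icc (z i), h⟩

end Factorial

section Asymptotics

lemma ceil_rpow_le {x κ : ℝ} (hx : 1 ≤ x) (hκ : 0 ≤ κ) : (⌈x ^ κ⌉₊ : ℝ) ≤ 2 * x ^ κ :=
  Nat.ceil_le_two_mul ((by norm_num : (2⁻¹ : ℝ) ≤ 1).trans (Real.one_le_rpow hx hκ))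

/-- The exponent of `q` in `gridMoment q N K l` when `N` and `K` are about `q ^ θ` and
`q ^ (θ / (l + 1))`, the choice of `K` that balances the two terms of `gridMoment`. -/
noncomputable def momentExponent (θ : ℝ) (l : ℕ) : ℝ :=
  1 - l * θ / (l + 1)

lemma momentExponent_pos {θ : ℝ} (hθ : θ < 1) (l : ℕ) : 0 < momentExponent θ l := by
  rw [momentExponent, sub_pos, div_lt_one (by positivity)]
  nlinarith

lemma three_mul_momentExponent_add_lt_iff {θ : ℝ} {l : ℕ} :
    3 * momentExponent θ l + momentExponent θ 2 < (θ - momentExponent θ l) / 2 ↔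
      27 * (l + 1) < 7 * (4 * l + 1) * θ := by
  have difference_eq : 3 * momentExponent θ l + momentExponent θ 2 - (θ - momentExponent θ l) / 2 =
      (27 * (l + 1) - 7 * (4 * l + 1) * θ) / (6 * (l + 1)) := by
    simp only [momentExponent]
    field_simp
    push_cast
    ring
  rw [← sub_neg, difference_eq, div_lt_iff₀ (by positivity), zero_mul, sub_neg]

lemma gridMoment_ceil_rpow_le {x θ : ℝ} (hx : 1 ≤ x) (hθ : 0 ≤ θ) (l : ℕ) :
    gridMoment x ⌈x ^ θ⌉₊ ⌈x ^ (θ / (l + 1))⌉₊ l ≤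
      (l.factorial + 2) * x ^ momentExponent θ l := by
  have x_pos : 0 < x := by positivity
  set κ := θ / (l + 1) with κ_def
  have κ_sub : κ - θ = -(l * κ) := by
    rw [κ_def]
    field_simp
    ring
  have first_le : (l.factorial : ℝ) / (⌈x ^ κ⌉₊ : ℝ) ^ l ≤ l.factorial * x ^ (-(l * κ)) := by
    rw [Real.rpow_neg x_pos.le, ← div_eq_mul_inv, mul_comm (l : ℝ), Real.rpow_mul_natCast x_pos.le]
    gcongr
    exact Nat.le_ceil _
  have second_le : (⌈x ^ κ⌉₊ : ℝ) / ⌈x ^ θ⌉₊ ≤ 2 * x ^ (-(l * κ)) := by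
    rw [← κ_sub, Real.rpow_sub x_pos, ← mul_div_assoc]
    gcongr
    · exact ceil_rpow_le hx (by positivity)
    · exact Nat.le_ceil _
  calc gridMoment x ⌈x ^ θ⌉₊ ⌈x ^ κ⌉₊ l
      ≤ x * (l.factorial * x ^ (-(l * κ)) + 2 * x ^ (-(l * κ))) :=
        mul_le_mul_of_nonneg_left (add_le_add first_le second_le) x_pos.le
    _ = (l.factorial + 2) * x ^ momentExponent θ l := by
        rw [momentExponent, sub_eq_add_neg, mul_div_assoc, Real.rpow_add x_pos, Real.rpow_one]
        ring

lemma eventually_const_mul_rpow_lt_rpow {a b : ℝ} (hab : a < b) (C : ℝ) :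
    ∀ᶠ x : ℝ in atTop, C * x ^ a < x ^ b := by
  filter_upwards [(tendsto_rpow_atTop (sub_pos.mpr hab)).eventually_gt_atTop C,
    eventually_gt_atTop 0] with x hx x_pos
  rwa [Real.rpow_sub x_pos, lt_div_iff₀ (by positivity)] at hx

lemma eventually_lt_ceil_rpow {θ a b κ A B : ℝ} (hA : 0 ≤ A) (hB : 0 ≤ B) (hκ : 0 ≤ κ)
    (hκθ : 2 * κ + a = θ) (habκ : 3 * a + b < κ) :
    ∀ᶠ x : ℝ in atTop, (A * x ^ a) ^ 3 * (B * x ^ b) *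
      (1 + (⌈x ^ κ⌉₊ : ℝ) ^ 2 * (A * x ^ a) / ⌈x ^ θ⌉₊) < ⌈x ^ κ⌉₊ := by
  filter_upwards [eventually_const_mul_rpow_lt_rpow habκ (A ^ 3 * B * (1 + 4 * A)),
    eventually_ge_atTop 1] with x lt_rpow hx
  have x_pos : 0 < x := by positivity
  have rpow_three_mul : x ^ (3 * a) = (x ^ a) ^ 3 := by
    rw [mul_comm]
    exact_mod_cast Real.rpow_mul_natCast x_pos.le a 3
  have bracket_le : (⌈x ^ κ⌉₊ : ℝ) ^ 2 * (A * x ^ a) / ⌈x ^ θ⌉₊ ≤ 4 * A := by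
    rw [div_le_iff₀ (by positivity)]
    calc (⌈x ^ κ⌉₊ : ℝ) ^ 2 * (A * x ^ a) ≤ (2 * x ^ κ) ^ 2 * (A * x ^ a) := by
          gcongr
          exact ceil_rpow_le hx hκ
      _ = 4 * A * x ^ θ := by
          rw [← hκθ, Real.rpow_add x_pos, two_mul κ, Real.rpow_add x_pos]
          ring
      _ ≤ 4 * A * ⌈x ^ θ⌉₊ := by
          gcongr
          exact Nat.le_ceil _
  calc _ ≤ (A * x ^ a) ^ 3 * (B * x ^ b) * (1 + 4 * A) := by gcongr
    _ = A ^ 3 * B * (1 + 4 * A) * x ^ (3 * a + b) := by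
        rw [Real.rpow_add x_pos, rpow_three_mul]
        ring
    _ < x ^ κ := lt_rpow
    _ ≤ ⌈x ^ κ⌉₊ := Nat.le_ceil _

end Asymptotics

theorem eventually_exists_factorial_mul_factorial_add_sum_eq {k l : ℕ} {θ : ℝ}
    (hlk : 2 * l ≤ k) (hθ : 27 * (l + 1) < 7 * (4 * l + 1) * θ) (hθ1 : θ < 1) :
    ∀ᶠ p : ℕ in atTop, p.Prime → ∀ c : ZMod p,
      ∃ m ∈ Icc 1 (2 * ⌈(p : ℝ) ^ θ⌉₊), ∃ n ∈ Icc 1 (2 * ⌈(p : ℝ) ^ θ⌉₊), ∃ f : Fin k → ℕ,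
        (∀ i, f i ∈ Icc 1 (2 * ⌈(p : ℝ) ^ θ⌉₊)) ∧
          (m.factorial : ZMod p) * n.factorial + ∑ i, ((f i).factorial : ZMod p) = c := by
  have θ_pos : 0 < θ := pos_of_mul_pos_right (lt_trans (by positivity) hθ) (by positivity)
  have exponent_lt := three_mul_momentExponent_add_lt_iff.mpr hθ
  have exponent_pos := momentExponent_pos hθ1
  have eventually_balance :=
    eventually_lt_ceil_rpow (A := l.factorial + 2) (B := (2).factorial + 2) (by positivity)
      (by positivity) (by linarith [exponent_pos l, exponent_pos 2]) (by ring) exponent_lt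
  filter_upwards [tendsto_natCast_atTop_atTop.eventually eventually_balance,
    tendsto_natCast_atTop_atTop.eventually (eventually_const_mul_rpow_lt_rpow hθ1 2),
    eventually_gt_atTop l, eventually_gt_atTop 2] with p balance two_mul_lt hl hp prime c
  have : Fact p.Prime := ⟨prime⟩
  have one_le : (1 : ℝ) ≤ p := by exact_mod_cast prime.one_le
  have ceil_pos (κ : ℝ) : 0 < ⌈(p : ℝ) ^ κ⌉₊ := Nat.ceil_pos.mpr (by positivity)
  have ceil_lt : ⌈(p : ℝ) ^ θ⌉₊ < p := by
    rw [Real.rpow_one] at two_mul_lt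
    exact_mod_cast (ceil_rpow_le one_le θ_pos.le).trans_lt two_mul_lt
  have Icc_subset {κ : ℝ} (hκ : κ ≤ θ) :
      Icc 1 (⌈(p : ℝ) ^ θ⌉₊ + ⌈(p : ℝ) ^ κ⌉₊) ⊆ Icc 1 (2 * ⌈(p : ℝ) ^ θ⌉₊) := by
    rw [two_mul]
    gcongr
  obtain ⟨m, hm, n, hn, f, hf, h⟩ := exists_factorial_mul_factorial_add_sum_eq hl hp hlk
    (ceil_pos θ) ceil_lt (ceil_pos _) (ceil_pos _) (ceil_pos _)
    (gridMoment_ceil_rpow_le one_le θ_pos.le l) (gridMoment_ceil_rpow_le one_le θ_pos.le 2)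
    balance c
  exact ⟨m, Icc_subset (by linarith [exponent_pos l]) hm,
    n, Icc_subset (div_le_self θ_pos.le (by simp)) hn, f,
    fun i ↦ Icc_subset (div_le_self θ_pos.le (by simp)) (hf i), h⟩

end FactorialSums

open FactorialSums in
theorem stmt_15_general {k l : ℕ} {θ : ℝ} (hlk : 2 * l ≤ k)
    (hθ : 27 * (l + 1) < 7 * (4 * l + 1) * θ) (hθ1 : θ < 1) :
    ∃ C : ℝ, 0 < C ∧ ∃ p₀ : ℕ, ∀ p : ℕ, p.Prime → p₀ ≤ p → ∀ lam : ZMod p,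
      ∃ (m n : ℕ) (f : Fin k → ℕ),
        1 ≤ m ∧ 1 ≤ n ∧ (∀ i, 1 ≤ f i) ∧
        (m : ℝ) ≤ C * (p : ℝ) ^ θ ∧ (n : ℝ) ≤ C * (p : ℝ) ^ θ ∧
        (∀ i, (f i : ℝ) ≤ C * (p : ℝ) ^ θ) ∧
        (Nat.factorial m : ZMod p) * (Nat.factorial n : ZMod p)
          + ∑ i, (Nat.factorial (f i) : ZMod p) = lam := by
  obtain ⟨p₀, hp₀⟩ := eventually_atTop.mp
    (eventually_exists_factorial_mul_factorial_add_sum_eq hlk hθ hθ1)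
  refine ⟨4, by norm_num, p₀, fun p prime hp lam ↦ ?_⟩
  obtain ⟨m, hm, n, hn, f, hf, h⟩ := hp₀ p hp prime lam
  have θ_pos : 0 < θ := pos_of_mul_pos_right (lt_trans (by positivity) hθ) (by positivity)
  have le_four_mul {x : ℕ} (hx : x ∈ Icc 1 (2 * ⌈(p : ℝ) ^ θ⌉₊)) : (x : ℝ) ≤ 4 * (p : ℝ) ^ θ := by
    have ceil_le := ceil_rpow_le (x := p) (by exact_mod_cast prime.one_le) θ_pos.le
    have : (x : ℝ) ≤ 2 * ⌈(p : ℝ) ^ θ⌉₊ := by exact_mod_cast (mem_Icc.mp hx).2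
    linarith
  exact ⟨m, n, f, (mem_Icc.mp hm).1, (mem_Icc.mp hn).1, fun i ↦ (mem_Icc.mp (hf i)).1,
    le_four_mul hm, le_four_mul hn, fun i ↦ le_four_mul (hf i), h⟩

theorem stmt_15 :
    ∃ C : ℝ, 0 < C ∧ ∃ p₀ : ℕ, ∀ p : ℕ, p.Prime → p₀ ≤ p → ∀ lam : ZMod p,
      ∃ (m n : ℕ) (f : Fin 47 → ℕ),
        1 ≤ m ∧ 1 ≤ n ∧ (∀ i, 1 ≤ f i) ∧
        (m : ℝ) ≤ C * (p : ℝ) ^ ((1300 : ℝ) / 1301) ∧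
        (n : ℝ) ≤ C * (p : ℝ) ^ ((1300 : ℝ) / 1301) ∧
        (∀ i, (f i : ℝ) ≤ C * (p : ℝ) ^ ((1300 : ℝ) / 1301)) ∧
        (Nat.factorial m : ZMod p) * (Nat.factorial n : ZMod p)
          + ∑ i, (Nat.factorial (f i) : ZMod p) = lam :=
  stmt_15_general (l := 23) (by norm_num) (by norm_num) (by norm_num)
end

section
/- Let $p$ be a prime, $\mathcal{M} \subseteq \mathbb{F}_p^*$ with $|\mathcal{M}| = M$, and $\mathcal{I} = \{1, \ldots, N\} \pmod p$ with $p^{2/3} \le N < p$. Then $|\mathcal{I} \cdot \mathcal{M}| \gg \min\{p, \; N M p^{-o(1)}\}$, i.e., for every $\varepsilon > 0$ there is $c(\varepsilon) > 0$ with $|\mathcal{I}\cdot\mathcal{M}| \ge c(\varepsilon)\min\{p, NMp^{-\varepsilon}\}$. -/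
open Finset

/-!
The image `I * M` is large once the multiplicative energy of `I` and `M` is small, and this energy
counts the points `(a, b) ∈ [1, N]²` of the lattices `Λ(m, n) = {(a, b) | a m = b n}`, `m, n ∈ M`.
Write `E(L)` for the number of nonzero points of all these lattices in the square `[-L, L]²`.

* Geometry of numbers: a lattice in `ℤ²` all of whose determinants are divisible by `p`, with
  shortest vector of length `l`, has `O(L² / p + L / l)` nonzero points in `[-L, L]²` and at least
  `⌊K / l⌋` in `[-K, K]²`. Hence `E(L) ≪ |M|² L² / p + (L / K) (|M|² + E(K))`.
* Multiplicativity: `a m = b n` and `a' m' = b' n` give `(a b') m = (a' b) m'`, so Cauchy–Schwarz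
  and the divisor bound give `E(K)² ≤ |M| p^{o(1)} E(K²)`.

With `K = ⌊p / N⌋ ≤ p^{1/3}`, the first estimate from `K²` down to `K` turns the second into a
quadratic inequality for `E(K)`, and the first estimate from `N` down to `K` then bounds `E(N)`.
-/

section DivisorBound

lemma add_one_le_mul_pow {δ x : ℝ} (hδ : 0 < δ) (hx : 1 + δ ≤ x) (k : ℕ) :
    (k + 1 : ℝ) ≤ (1 + 1 / δ) * x ^ k := by
  calc (k + 1 : ℝ) ≤ k + 1 + (k * δ + 1 / δ) := le_add_of_nonneg_right (by positivity)
    _ = (1 + 1 / δ) * (1 + k * δ) := by field_simp; ring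
    _ ≤ (1 + 1 / δ) * (1 + δ) ^ k := by gcongr; exact one_add_mul_le_pow (by linarith) k
    _ ≤ (1 + 1 / δ) * x ^ k := by gcongr

lemma natCast_rpow_eq_prod_primeFactors {n : ℕ} (hn : n ≠ 0) (ε : ℝ) :
    (n : ℝ) ^ ε = ∏ q ∈ n.primeFactors, ((q : ℝ) ^ ε) ^ n.factorization q := by
  have hprod : (n : ℝ) = ∏ q ∈ n.primeFactors, (q : ℝ) ^ n.factorization q := by
    exact_mod_cast (Nat.prod_factorization_pow_eq_self hn).symm
  conv_lhs => rw [hprod]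
  rw [← Real.finsetProd_rpow _ _ fun q _ ↦ by positivity]
  exact prod_congr rfl fun q _ ↦ Real.rpow_pow_comm q.cast_nonneg ε _ |>.symm

lemma add_one_le_ite_mul_rpow_pow {ε : ℝ} (hε : 0 < ε) {q : ℕ} (hq : 2 ≤ q) (k : ℕ) :
    (k + 1 : ℝ) ≤
      (if q < ⌈(2 : ℝ) ^ ε⁻¹⌉₊ then 1 + 1 / (2 ^ ε - 1) else 1) * ((q : ℝ) ^ ε) ^ k := by
  -- Either `q ^ ε ≥ 2 ^ ε` and Bernoulli's inequality costs a constant, or `q ^ ε ≥ 2`.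
  split_ifs with hq_lt
  · refine add_one_le_mul_pow (sub_pos.2 (Real.one_lt_rpow one_lt_two hε)) ?_ k
    have : (2 : ℝ) ≤ q := mod_cast hq
    rw [add_sub_cancel]
    gcongr
  · have two_le : (2 : ℝ) ≤ (q : ℝ) ^ ε :=
      (Real.rpow_inv_le_iff_of_pos zero_le_two q.cast_nonneg hε).1 (Nat.ceil_le.1 (not_lt.1 hq_lt))
    calc (k + 1 : ℝ) ≤ 2 ^ k := mod_cast Nat.lt_two_pow_self (n := k)
      _ ≤ 1 * ((q : ℝ) ^ ε) ^ k := by rw [one_mul]; gcongr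

theorem exists_card_divisors_le_mul_rpow {ε : ℝ} (hε : 0 < ε) :
    ∃ C : ℝ, 0 < C ∧ ∀ n : ℕ, (#n.divisors : ℝ) ≤ C * (n : ℝ) ^ ε := by
  set A : ℝ := 1 + 1 / (2 ^ ε - 1)
  have hA : 1 ≤ A := by
    have : (0 : ℝ) < 2 ^ ε - 1 := sub_pos.2 (Real.one_lt_rpow one_lt_two hε)
    exact le_add_of_nonneg_right (by positivity)
  set B : ℕ := ⌈(2 : ℝ) ^ ε⁻¹⌉₊
  refine ⟨A ^ B, by positivity, fun n ↦ ?_⟩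
  rcases eq_or_ne n 0 with rfl | hn
  · simp [hε.ne']
  have small_primes : #{q ∈ n.primeFactors | q < B} ≤ B := by
    simpa using card_le_card (show {q ∈ n.primeFactors | q < B} ⊆ range B by intro q; simp)
  calc (#n.divisors : ℝ) = ∏ q ∈ n.primeFactors, (n.factorization q + 1 : ℝ) := by
        rw [Nat.card_divisors hn]; push_cast; rfl
    _ ≤ ∏ q ∈ n.primeFactors, (if q < B then A else 1) * ((q : ℝ) ^ ε) ^ n.factorization q :=
        prod_le_prod (fun _ _ ↦ by positivity) fun q hq ↦
          add_one_le_ite_mul_rpow_pow hε (Nat.prime_of_mem_primeFactors hq).two_le _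
    _ = A ^ #{q ∈ n.primeFactors | q < B} * (n : ℝ) ^ ε := by
        rw [prod_mul_distrib, ← prod_filter, prod_const, natCast_rpow_eq_prod_primeFactors hn]
    _ ≤ A ^ B * (n : ℝ) ^ ε := by gcongr

lemma card_intDivisorsAntidiag (z : ℤ) : #z.divisorsAntidiag = 2 * #z.natAbs.divisors := by
  have hcard : #z.divisors = 2 * #z.natAbs.divisors := by
    rw [Int.divisors, card_disjUnion, card_map, card_map, two_mul]
  rw [← hcard, ← Int.image_fst_divisorsAntidiag, card_image_of_injOn]
  rintro ⟨a, b⟩ h ⟨a', b'⟩ h' rfl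
  simp only [mem_coe, Int.mem_divisorsAntidiag] at h h'
  have ha : a ≠ 0 := left_ne_zero_of_mul (h.1 ▸ h.2)
  rw [mul_left_cancel₀ ha (h.1.trans h'.1.symm)]

end DivisorBound

section SquarePoints

variable {Λ : AddSubgroup (ℤ × ℤ)} {K L l q : ℕ} {v w : ℤ × ℤ}

open Classical in
/-- The nonzero points of a subgroup `Λ` of `ℤ²` in the square `[-L, L]²`. -/
noncomputable def squarePoints (Λ : AddSubgroup (ℤ × ℤ)) (L : ℕ) : Finset (ℤ × ℤ) :=
  {v ∈ Icc (-L : ℤ) L ×ˢ Icc (-L : ℤ) L | v ∈ Λ ∧ v ≠ 0}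

lemma mem_squarePoints :
    v ∈ squarePoints Λ L ↔ |v.1| ≤ L ∧ |v.2| ≤ L ∧ v ∈ Λ ∧ v ≠ 0 := by
  simp only [squarePoints, mem_filter, mem_product, mem_Icc, ← abs_le, and_assoc]

lemma pos_of_mem_squarePoints (hv : v ∈ squarePoints Λ L) : 0 < L := by
  obtain ⟨h₁, h₂, -, hv0⟩ := mem_squarePoints.1 hv
  refine Nat.pos_of_ne_zero ?_
  rintro rfl
  exact hv0 (Prod.ext (abs_nonpos_iff.1 h₁) (abs_nonpos_iff.1 h₂))

lemma card_le_of_separated {α : Type*} {s : Finset α} (f : α → ℤ) (hl : 0 < l)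
    (hf : ∀ v ∈ s, |f v| ≤ L) (hsep : ∀ v ∈ s, ∀ w ∈ s, |f v - f w| < l → v = w) :
    #s ≤ 2 * L / l + 1 := by
  have hl' : (0 : ℤ) < l := mod_cast hl
  have hcard : #s ≤ #(Icc (0 : ℤ) ((2 * L / l : ℕ) : ℤ)) := by
    refine card_le_card_of_injOn (fun v ↦ (f v + L) / l) (fun v hv ↦ ?_) fun v hv w hw h ↦ ?_
    · have := abs_le.1 (hf v hv)
      rw [mem_coe, mem_Icc]
      push_cast
      exact ⟨Int.ediv_nonneg (by linarith) hl'.le, Int.ediv_le_ediv hl' (by linarith)⟩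
    · refine hsep v hv w hw (abs_lt.2 ?_)
      dsimp only at h
      have hv_div := Int.emod_add_mul_ediv (f v + L) l
      have hw_div := Int.emod_add_mul_ediv (f w + L) l
      rw [h] at hv_div
      have := Int.emod_nonneg (f v + L) hl'.ne'
      have := Int.emod_nonneg (f w + L) hl'.ne'
      have := Int.emod_lt_of_pos (f v + L) hl'
      have := Int.emod_lt_of_pos (f w + L) hl'
      constructor <;> linarith
  rwa [Int.card_Icc, sub_zero, ← Nat.cast_succ, Int.toNat_natCast] at hcard

lemma abs_lt_of_mul_eq_mul {a b x y l : ℤ} (h : a * y = b * x) (ha : |a| < |x|) (hy : |y| ≤ l)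
    (hx : |x| ≤ l) : |b| < l := by
  have hl : 0 < l := (abs_nonneg a).trans_lt (ha.trans_le hx)
  refine lt_of_mul_lt_mul_right ?_ (abs_nonneg x)
  calc |b| * |x| = |a| * |y| := by rw [← abs_mul, ← abs_mul, h]
    _ ≤ |a| * l := by gcongr
    _ < |x| * l := by gcongr
    _ = l * |x| := mul_comm _ _

lemma eq_zero_of_squarePoints_eq_empty (hmin : ∀ k < l, squarePoints Λ k = ∅) (hv : v ∈ Λ)
    (h₁ : |v.1| < l) (h₂ : |v.2| < l) : v = 0 := by
  by_contra hv0
  have hl : 0 < l := mod_cast (abs_nonneg v.1).trans_lt h₁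
  have hmem : v ∈ squarePoints Λ (l - 1) :=
    mem_squarePoints.2 ⟨by omega, by omega, hv, hv0⟩
  rw [hmin _ (by omega)] at hmem
  exact notMem_empty _ hmem

lemma card_squarePoints_det_eq_le (hmin : ∀ k < l, squarePoints Λ k = ∅)
    (hw : w ∈ squarePoints Λ l) (t : ℤ) :
    #{v ∈ squarePoints Λ L | v.1 * w.2 - v.2 * w.1 = t} ≤ 2 * L / l + 1 := by
  -- The points lie on a line parallel to `w`, so the coordinate in which `w` has size `l` dominates
  -- their differences; it is separated by `l` because no difference is shorter than `w`.
  obtain ⟨hw₁, hw₂, hwΛ, hw0⟩ := mem_squarePoints.1 hw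
  have eq_of_parallel {u v : ℤ × ℤ} (hu : u ∈ Λ) (hv : v ∈ Λ)
      (h₁ : |u.1 - v.1| < l) (h₂ : |u.2 - v.2| < l) : u = v :=
    sub_eq_zero.1 (eq_zero_of_squarePoints_eq_empty hmin (Λ.sub_mem hu hv) h₁ h₂)
  have hl : 0 < l := pos_of_mem_squarePoints hw
  have hmax : |w.1| = l ∨ |w.2| = l := by
    by_contra! hne
    exact hw0 (eq_zero_of_squarePoints_eq_empty hmin hwΛ (by omega) (by omega))
  rcases hmax with hmax | hmax
  · refine card_le_of_separated Prod.fst hl (fun v hv ↦ ?_) fun u hu v hv h ↦ ?_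
    all_goals simp only [mem_filter, mem_squarePoints] at *
    · exact hv.1.1
    · refine eq_of_parallel hu.1.2.2.1 hv.1.2.2.1 h ?_
      exact abs_lt_of_mul_eq_mul (by linarith) (hmax ▸ h) hw₂ hw₁
  · refine card_le_of_separated Prod.snd hl (fun v hv ↦ ?_) fun u hu v hv h ↦ ?_
    all_goals simp only [mem_filter, mem_squarePoints] at *
    · exact hv.1.2.1
    · refine eq_of_parallel hu.1.2.2.1 hv.1.2.2.1 ?_ h
      exact abs_lt_of_mul_eq_mul (by linarith) (hmax ▸ h) hw₁ hw₂

lemma abs_det_le (hv : v ∈ squarePoints Λ L) (hw : w ∈ squarePoints Λ l) :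
    |v.1 * w.2 - v.2 * w.1| ≤ 2 * L * l := by
  obtain ⟨hv₁, hv₂, -⟩ := mem_squarePoints.1 hv
  obtain ⟨hw₁, hw₂, -⟩ := mem_squarePoints.1 hw
  calc |v.1 * w.2 - v.2 * w.1| ≤ |v.1| * |w.2| + |v.2| * |w.1| := by
        rw [← abs_mul, ← abs_mul]; exact abs_sub _ _
    _ ≤ L * l + L * l := by gcongr
    _ = 2 * L * l := by ring

lemma card_squarePoints_le_mul (hq : 0 < q)
    (hdet : ∀ v ∈ Λ, ∀ w ∈ Λ, (q : ℤ) ∣ v.1 * w.2 - v.2 * w.1)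
    (hmin : ∀ k < l, squarePoints Λ k = ∅) (hne : (squarePoints Λ l).Nonempty) :
    #(squarePoints Λ L) ≤ (2 * L / l + 1) * (2 * (2 * L * l / q) + 1) := by
  obtain ⟨w, hw⟩ := hne
  have hq' : (0 : ℤ) < q := mod_cast hq
  set T : ℕ := 2 * L * l / q
  have hT : #(Icc (-T : ℤ) T) = 2 * T + 1 := by rw [Int.card_Icc]; omega
  rw [← hT]
  have det_eq {v} (hv : v ∈ squarePoints Λ L) :=
    Int.mul_ediv_cancel' (hdet v (mem_squarePoints.1 hv).2.2.1 w (mem_squarePoints.1 hw).2.2.1)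
  refine card_le_mul_card_image_of_maps_to (f := fun v ↦ (v.1 * w.2 - v.2 * w.1) / (q : ℤ))
    (fun v hv ↦ ?_) _ fun t _ ↦ ?_
  · rw [mem_Icc, ← abs_le]
    push_cast [T]
    rw [Int.le_ediv_iff_mul_le hq', ← abs_of_pos hq', ← abs_mul, mul_comm, abs_of_pos hq',
      det_eq hv]
    exact abs_det_le hv hw
  · refine (card_le_card fun v hv ↦ ?_).trans (card_squarePoints_det_eq_le hmin hw (q * t))
    rw [mem_filter] at hv ⊢
    exact ⟨hv.1, by rw [← hv.2, det_eq hv.1]⟩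

lemma div_le_card_squarePoints (hl : 0 < l) (hne : (squarePoints Λ l).Nonempty) :
    K / l ≤ #(squarePoints Λ K) := by
  obtain ⟨w, hw⟩ := hne
  obtain ⟨hw₁, hw₂, hwΛ, hw0⟩ := mem_squarePoints.1 hw
  have hcard : #(Icc 1 (K / l)) ≤ #(squarePoints Λ K) := by
    refine card_le_card_of_injOn (fun t ↦ (t : ℤ) • w) (fun t ht ↦ ?_)
      ((smul_left_injective ℤ hw0).comp Nat.cast_injective).injOn
    rw [mem_coe, mem_Icc] at ht
    have htK : (t * l : ℤ) ≤ K := mod_cast (Nat.le_div_iff_mul_le hl).1 ht.2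
    refine mem_squarePoints.2 ⟨?_, ?_, Λ.zsmul_mem hwΛ t, smul_ne_zero (by omega) hw0⟩
    · refine le_trans ?_ htK
      simp only [Prod.smul_fst, smul_eq_mul, abs_mul, Nat.abs_cast]
      gcongr
    · refine le_trans ?_ htK
      simp only [Prod.smul_snd, smul_eq_mul, abs_mul, Nat.abs_cast]
      gcongr
  simpa using hcard

theorem card_squarePoints_le (hq : 0 < q)
    (hdet : ∀ v ∈ Λ, ∀ w ∈ Λ, (q : ℤ) ∣ v.1 * w.2 - v.2 * w.1) (hK : 0 < K) :
    (#(squarePoints Λ L) : ℝ) ≤ 12 * L ^ 2 / q + 3 * (L / K) * (1 + #(squarePoints Λ K)) := by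
  classical
  rcases (squarePoints Λ L).eq_empty_or_nonempty with hempty | hL
  · rw [hempty, card_empty, Nat.cast_zero]
    positivity
  have hex : ∃ k, (squarePoints Λ k).Nonempty := ⟨L, hL⟩
  obtain ⟨l, hne, hmin, hlL⟩ : ∃ l, (squarePoints Λ l).Nonempty ∧
      (∀ k < l, squarePoints Λ k = ∅) ∧ l ≤ L :=
    ⟨Nat.find hex, Nat.find_spec hex,
      fun k hk ↦ not_nonempty_iff_eq_empty.1 (Nat.find_min hex hk), Nat.find_min' hex hL⟩
  have hl : 0 < l := hne.elim fun _ hw ↦ pos_of_mem_squarePoints hw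
  have hKl : (K : ℝ) ≤ (1 + #(squarePoints Λ K)) * l := by
    have hlt : K < (K / l + 1) * l := (Nat.div_lt_iff_lt_mul hl).1 (Nat.lt_succ_self _)
    have hle := div_le_card_squarePoints (K := K) hl hne
    have : K ≤ (1 + #(squarePoints Λ K)) * l :=
      hlt.le.trans (by rw [add_comm 1]; gcongr)
    exact_mod_cast this
  have hLl : (1 : ℝ) ≤ L / l := (one_le_div (by positivity)).2 (mod_cast hlL)
  calc (#(squarePoints Λ L) : ℝ)
      ≤ ((2 * L / l : ℕ) + 1) * (2 * (2 * L * l / q : ℕ) + 1) :=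
        mod_cast card_squarePoints_le_mul hq hdet hmin hne
    _ ≤ (2 * L / l + 1) * (2 * (2 * L * l / q) + 1) := by
        gcongr <;> exact Nat.cast_div_le.trans (by push_cast; rfl)
    _ ≤ (3 * (L / l)) * (2 * (2 * L * l / q) + 1) := by
        gcongr; linarith [mul_div_assoc (2 : ℝ) L l]
    _ = 12 * L ^ 2 / q + 3 * (L / l) := by field_simp; ring
    _ ≤ 12 * L ^ 2 / q + 3 * (L / K) * (1 + #(squarePoints Λ K)) := by
        rw [mul_assoc 3, div_mul_eq_mul_div]
        gcongr 12 * L ^ 2 / q + 3 * ?_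
        rw [div_le_div_iff₀ (by positivity) (by positivity), mul_assoc]
        gcongr

end SquarePoints

section RatioLattice

variable {p q : ℕ}

/-- The lattice of all `(a, b) ∈ ℤ²` with `a m = b n` in `ℤ / q`; for units `m` and `n`, its points
represent the ratio `n / m` as a quotient `a / b` of integers. -/
def ratioLattice (m n : ZMod q) : AddSubgroup (ℤ × ℤ) where
  carrier := {v | (v.1 : ZMod q) * m = v.2 * n}
  zero_mem' := by simp
  add_mem' {v w} hv hw := by
    simp only [Set.mem_ofPred_eq, Prod.fst_add, Prod.snd_add, Int.cast_add, add_mul] at *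
    rw [hv, hw]
  neg_mem' {v} hv := by simpa using hv

lemma mem_ratioLattice {m n : ZMod q} {v : ℤ × ℤ} :
    v ∈ ratioLattice m n ↔ (v.1 : ZMod q) * m = v.2 * n :=
  Iff.rfl

lemma dvd_det_of_mem_ratioLattice {m n : ZMod q} (hm : IsUnit m) {v w : ℤ × ℤ}
    (hv : v ∈ ratioLattice m n) (hw : w ∈ ratioLattice m n) :
    (q : ℤ) ∣ v.1 * w.2 - v.2 * w.1 := by
  rw [mem_ratioLattice] at hv hw
  rw [← ZMod.intCast_zmod_eq_zero_iff_dvd, ← hm.mul_left_eq_zero]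
  push_cast
  linear_combination (w.2 : ZMod q) * hv - (v.2 : ZMod q) * hw

lemma intCast_ne_zero_of_mem_squarePoints [Fact p.Prime] {K : ℕ} (hK : K < p) {m n : ZMod p}
    (hm : m ≠ 0) (hn : n ≠ 0) {v : ℤ × ℤ} (hv : v ∈ squarePoints (ratioLattice m n) K) :
    (v.1 : ZMod p) ≠ 0 ∧ (v.2 : ZMod p) ≠ 0 := by
  obtain ⟨h₁, h₂, hΛ, hv0⟩ := mem_squarePoints.1 hv
  have both_zero : ¬((v.1 : ZMod p) = 0 ∧ (v.2 : ZMod p) = 0) := by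
    simp only [ZMod.intCast_zmod_eq_zero_iff_dvd]
    rintro ⟨d₁, d₂⟩
    exact hv0 (Prod.ext (Int.eq_zero_of_abs_lt_dvd d₁ (by omega))
      (Int.eq_zero_of_abs_lt_dvd d₂ (by omega)))
  have zero_iff : (v.1 : ZMod p) = 0 ↔ (v.2 : ZMod p) = 0 := by
    rw [← mul_eq_zero_iff_right hm, mem_ratioLattice.1 hΛ, mul_eq_zero_iff_right hn]
  tauto

lemma ne_zero_of_mem_squarePoints [Fact p.Prime] {K : ℕ} (hK : K < p) {m n : ZMod p}
    (hm : m ≠ 0) (hn : n ≠ 0) {v : ℤ × ℤ} (hv : v ∈ squarePoints (ratioLattice m n) K) :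
    v.1 ≠ 0 ∧ v.2 ≠ 0 := by
  obtain ⟨hv₁, hv₂⟩ := intCast_ne_zero_of_mem_squarePoints hK hm hn hv
  exact ⟨fun h ↦ hv₁ (by simp [h]), fun h ↦ hv₂ (by simp [h])⟩

lemma mul_mem_squarePoints [Fact p.Prime] {K : ℕ} (hK : K < p) {m m' n : ZMod p}
    (hm : m ≠ 0) (hm' : m' ≠ 0) (hn : n ≠ 0) {v w : ℤ × ℤ}
    (hv : v ∈ squarePoints (ratioLattice m n) K) (hw : w ∈ squarePoints (ratioLattice m' n) K) :
    (v.1 * w.2, w.1 * v.2) ∈ squarePoints (ratioLattice m m') (K ^ 2) := by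
  obtain ⟨hv₁, -⟩ := intCast_ne_zero_of_mem_squarePoints hK hm hn hv
  obtain ⟨-, hw₂⟩ := intCast_ne_zero_of_mem_squarePoints hK hm' hn hw
  rw [mem_squarePoints, mem_ratioLattice] at hv hw
  obtain ⟨hv₁K, hv₂K, hvΛ, -⟩ := hv
  obtain ⟨hw₁K, hw₂K, hwΛ, -⟩ := hw
  refine mem_squarePoints.2 ⟨?_, ?_, ?_, fun h ↦ ?_⟩
  · rw [abs_mul, Nat.cast_pow, sq]; gcongr
  · rw [abs_mul, Nat.cast_pow, sq]; gcongr
  · rw [mem_ratioLattice]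
    push_cast
    linear_combination (w.2 : ZMod p) * hvΛ - (v.2 : ZMod p) * hwΛ
  · have hzero : ((v.1 * w.2 : ℤ) : ZMod p) = 0 := by
      rw [show v.1 * w.2 = 0 from (Prod.ext_iff.1 h).1, Int.cast_zero]
    rw [Int.cast_mul] at hzero
    exact mul_ne_zero hv₁ hw₂ hzero

lemma card_filter_mul_eq_le [Fact p.Prime] {K : ℕ} (hK : K < p) {M : Finset (ZMod p)}
    (hM : ∀ n ∈ M, n ≠ 0) {m m' : ZMod p} (hm : m ≠ 0) (hm' : m' ≠ 0) (x y : ℤ) :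
    #{z ∈ M.sigma fun n ↦ squarePoints (ratioLattice m n) K ×ˢ squarePoints (ratioLattice m' n) K |
        (z.2.1.1 * z.2.2.2, z.2.2.1 * z.2.1.2) = (x, y)} ≤
      #x.divisorsAntidiag * #y.divisorsAntidiag := by
  rw [← card_product]
  refine card_le_card_of_injOn (fun z ↦ ((z.2.1.1, z.2.2.2), (z.2.2.1, z.2.1.2))) ?_ ?_
  all_goals simp only [Set.InjOn, Set.MapsTo, coe_filter, Set.mem_ofPred_eq, mem_sigma, mem_product]
  · rintro ⟨n, v, w⟩ ⟨⟨hn, hv, hw⟩, hvw⟩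
    obtain ⟨hv₁, hv₂⟩ := ne_zero_of_mem_squarePoints hK hm (hM n hn) hv
    obtain ⟨hw₁, hw₂⟩ := ne_zero_of_mem_squarePoints hK hm' (hM n hn) hw
    obtain ⟨rfl, rfl⟩ := Prod.mk.inj hvw
    simp [hv₁, hv₂, hw₁, hw₂]
  · rintro ⟨n, v, w⟩ ⟨⟨hn, hv, -⟩, -⟩ ⟨n', v', w'⟩ ⟨⟨-, hv', -⟩, -⟩ heq
    obtain ⟨rfl, rfl⟩ : v = v' ∧ w = w' := by simp_all [Prod.ext_iff]
    obtain ⟨-, hv₂⟩ := intCast_ne_zero_of_mem_squarePoints hK hm (hM n hn) hv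
    have hΛ := (mem_squarePoints.1 hv).2.2.1
    have hΛ' := (mem_squarePoints.1 hv').2.2.1
    obtain rfl : n = n' := mul_left_cancel₀ hv₂ (hΛ.symm.trans hΛ')
    rfl

lemma sum_card_squarePoints_mul_le [Fact p.Prime] {K d : ℕ} (hK : K < p)
    (hd : ∀ k : ℕ, k ≤ K ^ 2 → #k.divisors ≤ d) {M : Finset (ZMod p)} (hM : ∀ n ∈ M, n ≠ 0)
    {m m' : ZMod p} (hm : m ≠ 0) (hm' : m' ≠ 0) :
    ∑ n ∈ M, #(squarePoints (ratioLattice m n) K) * #(squarePoints (ratioLattice m' n) K) ≤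
      (2 * d) ^ 2 * #(squarePoints (ratioLattice m m') (K ^ 2)) := by
  have hcard {z : ℤ} (hz : |z| ≤ (K ^ 2 : ℕ)) : #z.divisorsAntidiag ≤ 2 * d := by
    rw [card_intDivisorsAntidiag]
    gcongr
    exact hd _ (by rw [Int.abs_eq_natAbs] at hz; exact_mod_cast hz)
  simp only [← card_product]
  rw [← card_sigma]
  refine card_le_mul_card_image_of_maps_to
    (f := fun z ↦ (z.2.1.1 * z.2.2.2, z.2.2.1 * z.2.1.2)) ?_ _ ?_
  · rintro ⟨n, v, w⟩ h
    simp only [mem_sigma, mem_product] at h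
    exact mul_mem_squarePoints hK hm hm' (hM n h.1) h.2.1 h.2.2
  · rintro ⟨x, y⟩ hxy
    obtain ⟨hx, hy, -⟩ := mem_squarePoints.1 hxy
    refine (card_filter_mul_eq_le hK hM hm hm' x y).trans ?_
    rw [sq]
    exact Nat.mul_le_mul (hcard hx) (hcard hy)

end RatioLattice

section Energy

open scoped Pointwise Combinatorics.Additive

variable {p q : ℕ}

/-- The number of solutions of `a m = b n` with `m, n ∈ M` and nonzero `(a, b) ∈ [-L, L]²`. The
coefficients range over integers, not residues, so `L` may exceed `q / 2`. -/
noncomputable def squareEnergy (M : Finset (ZMod q)) (L : ℕ) : ℕ :=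
  ∑ m ∈ M, ∑ n ∈ M, #(squarePoints (ratioLattice m n) L)

lemma mulEnergy_natCast_Icc_le_squareEnergy (N : ℕ) (M : Finset (ZMod q)) :
    Eₘ[(Icc 1 N).image Nat.cast, M] ≤ squareEnergy M N := by
  rw [mulEnergy, card_filter, sum_product_right, sum_product, squareEnergy]
  gcongr with m _ n _
  rw [← card_filter]
  refine le_trans (card_le_card fun x hx ↦ ?_)
    (card_image_le (f := fun v : ℤ × ℤ ↦ ((v.1 : ZMod q), (v.2 : ZMod q))))
  obtain ⟨x, y⟩ := x
  simp only [mem_filter, mem_product, mem_image, mem_Icc] at hx ⊢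
  obtain ⟨⟨⟨i, hi, rfl⟩, ⟨j, hj, rfl⟩⟩, hij⟩ := hx
  refine ⟨(i, j), mem_squarePoints.2
    ⟨by rw [Nat.abs_cast]; exact_mod_cast hi.2, by rw [Nat.abs_cast]; exact_mod_cast hj.2, ?_, ?_⟩,
    by simp⟩
  · simpa [mem_ratioLattice] using hij
  · simp only [ne_eq, Prod.mk_eq_zero, Nat.cast_eq_zero]
    omega

theorem squareEnergy_le [Fact p.Prime] {M : Finset (ZMod p)} (hM : ∀ m ∈ M, m ≠ 0) {K : ℕ}
    (hK : 0 < K) (L : ℕ) :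
    (squareEnergy M L : ℝ) ≤
      12 * L ^ 2 / p * #M ^ 2 + 3 * (L / K) * (#M ^ 2 + squareEnergy M K) := by
  have hp : 0 < p := (Fact.out : p.Prime).pos
  calc (squareEnergy M L : ℝ)
      = ∑ m ∈ M, ∑ n ∈ M, (#(squarePoints (ratioLattice m n) L) : ℝ) := by
        simp only [squareEnergy, Nat.cast_sum]
    _ ≤ ∑ m ∈ M, ∑ n ∈ M, (12 * L ^ 2 / p +
          3 * (L / K) * (1 + #(squarePoints (ratioLattice m n) K)) : ℝ) := by
        gcongr with m hm n _
        exact card_squarePoints_le hp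
          (fun v hv w hw ↦ dvd_det_of_mem_ratioLattice (hM m hm).isUnit hv hw) hK
    _ = 12 * L ^ 2 / p * #M ^ 2 + 3 * (L / K) * (#M ^ 2 + squareEnergy M K) := by
        simp only [squareEnergy, sum_add_distrib, ← mul_sum, sum_const, nsmul_eq_mul,
          Nat.cast_sum, mul_one]
        ring

theorem sq_squareEnergy_le [Fact p.Prime] {K d : ℕ} (hK : K < p)
    (hd : ∀ k : ℕ, k ≤ K ^ 2 → #k.divisors ≤ d) {M : Finset (ZMod p)} (hM : ∀ m ∈ M, m ≠ 0) :
    squareEnergy M K ^ 2 ≤ #M * ((2 * d) ^ 2 * squareEnergy M (K ^ 2)) := by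
  set r : ZMod p → ZMod p → ℕ := fun m n ↦ #(squarePoints (ratioLattice m n) K)
  calc squareEnergy M K ^ 2 = (∑ n ∈ M, ∑ m ∈ M, r m n) ^ 2 := by
        rw [squareEnergy, sum_comm]
    _ ≤ #M * ∑ n ∈ M, (∑ m ∈ M, r m n) ^ 2 := sq_sum_le_card_mul_sum_sq
    _ = #M * ∑ m ∈ M, ∑ m' ∈ M, ∑ n ∈ M, r m n * r m' n := by
        simp only [sq, sum_mul_sum]
        rw [sum_comm]
        congr 1
        exact sum_congr rfl fun m _ ↦ sum_comm
    _ ≤ #M * ∑ m ∈ M, ∑ m' ∈ M, (2 * d) ^ 2 * #(squarePoints (ratioLattice m m') (K ^ 2)) := by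
        gcongr with m hm m' hm'
        exact sum_card_squarePoints_mul_le hK hd hM (hM m hm) (hM m' hm')
    _ = #M * ((2 * d) ^ 2 * squareEnergy M (K ^ 2)) := by
        simp only [squareEnergy, mul_sum]

lemma le_of_sq_le_mul_add {e u v : ℝ} (hu : 0 ≤ u) (hv : 0 ≤ v)
    (h : e ^ 2 ≤ v * (15 * u + 3 * e)) : e ≤ 15 * u + 4 * v := by
  by_contra! hlt
  nlinarith [mul_nonneg hv hu, mul_nonneg hu hu]

lemma exists_pow_three_le_and_le_two_mul {N : ℕ} (hp : 0 < p) (hN : p ^ 2 ≤ N ^ 3)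
    (hNp : N ≤ p) : ∃ K, 0 < K ∧ K ^ 3 ≤ p ∧ p ≤ 2 * N * K := by
  have hN0 : 0 < N := Nat.pos_of_ne_zero (by rintro rfl; simp [hp.ne'] at hN)
  have hK : 0 < p / N := Nat.div_pos hNp hN0
  refine ⟨p / N, hK, ?_, ?_⟩
  · refine Nat.le_of_mul_le_mul_right (c := p ^ 2) ?_ (by positivity)
    calc (p / N) ^ 3 * p ^ 2 ≤ (p / N) ^ 3 * N ^ 3 := by gcongr
      _ = (p / N * N) ^ 3 := (mul_pow _ _ _).symm
      _ ≤ p ^ 3 := by gcongr; exact Nat.div_mul_le_self p N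
      _ = p * p ^ 2 := pow_succ' p 2
  · have hlt : p < (p / N + 1) * N := (Nat.div_lt_iff_lt_mul hN0).1 (Nat.lt_succ_self _)
    nlinarith

lemma squareEnergy_div_le [Fact p.Prime] {K d : ℕ} (hK : 0 < K) (hKp : K ^ 3 ≤ p)
    (hd : ∀ k : ℕ, k ≤ p → #k.divisors ≤ d) {M : Finset (ZMod p)} (hM : ∀ m ∈ M, m ≠ 0) :
    (squareEnergy M K : ℝ) / K ≤ 15 * (#M ^ 2 / K) + 4 * ((2 * d) ^ 2 * #M) := by
  have hp : 1 < p := (Fact.out : p.Prime).one_lt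
  have hK_lt : K < p := by
    rcases Nat.lt_or_ge 1 K with h | h
    · exact (lt_self_pow₀ h (by norm_num)).trans_le hKp
    · exact h.trans_lt hp
  have hK2 : K ^ 2 ≤ p := (Nat.pow_le_pow_right hK (by norm_num)).trans hKp
  have squared : (squareEnergy M K : ℝ) ^ 2 ≤ #M * ((2 * d) ^ 2 * squareEnergy M (K ^ 2)) :=
    mod_cast sq_squareEnergy_le hK_lt (fun k hk ↦ hd k (hk.trans hK2)) hM
  have at_square : (squareEnergy M (K ^ 2) : ℝ) ≤ K * (15 * #M ^ 2 + 3 * squareEnergy M K) := by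
    have hcov : 12 * ((K : ℝ) ^ 2) ^ 2 / p ≤ 12 * K := by
      rw [div_le_iff₀ (by positivity), ← pow_mul, mul_assoc]
      gcongr
      exact_mod_cast (pow_succ' K 3).trans_le (Nat.mul_le_mul_left K hKp)
    calc (squareEnergy M (K ^ 2) : ℝ)
        ≤ 12 * ((K : ℝ) ^ 2) ^ 2 / p * #M ^ 2
          + 3 * ((K : ℝ) ^ 2 / K) * (#M ^ 2 + squareEnergy M K) :=
          mod_cast squareEnergy_le hM hK (K ^ 2)
      _ ≤ 12 * K * #M ^ 2 + 3 * ((K : ℝ) ^ 2 / K) * (#M ^ 2 + squareEnergy M K) := by gcongr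
      _ = K * (15 * #M ^ 2 + 3 * squareEnergy M K) := by field_simp; ring
  refine le_of_sq_le_mul_add (by positivity) (by positivity) ?_
  rw [div_pow, div_le_iff₀ (by positivity)]
  calc (squareEnergy M K : ℝ) ^ 2
      ≤ #M * ((2 * d) ^ 2 * (K * (15 * #M ^ 2 + 3 * squareEnergy M K))) :=
        squared.trans (by gcongr)
    _ = _ := by field_simp

theorem squareEnergy_le_of_card_divisors_le [Fact p.Prime] {N d : ℕ} (hN : p ^ 2 ≤ N ^ 3)
    (hNp : N ≤ p) (hd : ∀ k : ℕ, k ≤ p → #k.divisors ≤ d) {M : Finset (ZMod p)}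
    (hM : ∀ m ∈ M, m ≠ 0) :
    (squareEnergy M N : ℝ) ≤ 108 * (N * #M) * (N * #M / p + (2 * d) ^ 2) := by
  have hp : 0 < p := (Fact.out : p.Prime).pos
  obtain ⟨K, hK, hKp, hpNK⟩ := exists_pow_three_le_and_le_two_mul hp hN hNp
  have hKinv : 1 / (K : ℝ) ≤ 2 * N / p := by
    rw [div_le_div_iff₀ (by positivity) (by positivity), one_mul]
    exact_mod_cast hpNK
  calc (squareEnergy M N : ℝ)
      ≤ 12 * N ^ 2 / p * #M ^ 2 + 3 * (N / K) * (#M ^ 2 + squareEnergy M K) :=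
        squareEnergy_le hM hK N
    _ = 12 * N ^ 2 / p * #M ^ 2 + 3 * N * (#M ^ 2 * (1 / K) + squareEnergy M K / K) := by
        ring
    _ ≤ 12 * N ^ 2 / p * #M ^ 2 +
          3 * N * (#M ^ 2 * (1 / K) + (15 * (#M ^ 2 / K) + 4 * ((2 * d) ^ 2 * #M))) := by
        gcongr
        exact squareEnergy_div_le hK hKp hd hM
    _ = 12 * N ^ 2 / p * #M ^ 2 + 48 * N * #M ^ 2 * (1 / K) + 12 * (N * #M) * (2 * d) ^ 2 := by
        ring
    _ ≤ 12 * N ^ 2 / p * #M ^ 2 + 48 * N * #M ^ 2 * (2 * N / p)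
          + 108 * (N * #M) * (2 * d) ^ 2 := by
        gcongr
        norm_num
    _ = 108 * (N * #M) * (N * #M / p + (2 * d) ^ 2) := by ring

theorem exists_mulEnergy_natCast_Icc_le {ε : ℝ} (hε : 0 < ε) :
    ∃ C : ℝ, 0 < C ∧ ∀ (p N : ℕ) [Fact p.Prime], (p : ℝ) ^ (2 / 3 : ℝ) ≤ N → N ≤ p →
      ∀ M : Finset (ZMod p), (∀ m ∈ M, m ≠ 0) →
        (Eₘ[(Icc 1 N).image Nat.cast, M] : ℝ) ≤ C * ((N * #M) * (N * #M / p + (p : ℝ) ^ ε)) := by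
  obtain ⟨C, hC, hdiv⟩ := exists_card_divisors_le_mul_rpow (half_pos hε)
  refine ⟨108 * (1 + 4 * C ^ 2), by positivity, fun p N _ hN hNp M hM ↦ ?_⟩
  have hN3 : p ^ 2 ≤ N ^ 3 := by
    have hcube : ((p : ℝ) ^ (2 / 3 : ℝ)) ^ 3 = p ^ 2 := by
      rw [← Real.rpow_mul_natCast p.cast_nonneg]; norm_num
    exact_mod_cast hcube.symm.trans_le (pow_le_pow_left₀ (by positivity) hN 3)
  set d : ℕ := ⌊C * (p : ℝ) ^ (ε / 2)⌋₊
  have hd (k : ℕ) (hk : k ≤ p) : #k.divisors ≤ d := Nat.le_floor ((hdiv k).trans (by gcongr))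
  have hd_sq : (2 * d : ℝ) ^ 2 ≤ 4 * C ^ 2 * (p : ℝ) ^ ε := by
    calc (2 * d : ℝ) ^ 2 ≤ (2 * (C * (p : ℝ) ^ (ε / 2))) ^ 2 := by
          gcongr; exact Nat.floor_le (by positivity)
      _ = 4 * C ^ 2 * ((p : ℝ) ^ (ε / 2)) ^ 2 := by ring
      _ = 4 * C ^ 2 * (p : ℝ) ^ ε := by
          rw [← Real.rpow_mul_natCast p.cast_nonneg]; norm_num
  calc (Eₘ[(Icc 1 N).image Nat.cast, M] : ℝ) ≤ squareEnergy M N :=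
        mod_cast mulEnergy_natCast_Icc_le_squareEnergy N M
    _ ≤ 108 * (N * #M) * (N * #M / p + (2 * d) ^ 2) :=
        squareEnergy_le_of_card_divisors_le hN3 hNp hd hM
    _ ≤ 108 * (N * #M) * ((1 + 4 * C ^ 2) * (N * #M / p) + (1 + 4 * C ^ 2) * (p : ℝ) ^ ε) := by
        gcongr
        · exact le_mul_of_one_le_left (by positivity) (by nlinarith)
        · exact hd_sq.trans (by gcongr; linarith)
    _ = 108 * (1 + 4 * C ^ 2) * ((N * #M) * (N * #M / p + (p : ℝ) ^ ε)) := by ring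

lemma sq_mul_card_le_card_image_mul_mulEnergy {N : ℕ} (hN : N < q) (M : Finset (ZMod q)) :
    (N * #M) ^ 2 ≤ #((Icc 1 N ×ˢ M).image fun x : ℕ × ZMod q ↦ (x.1 : ZMod q) * x.2) *
      Eₘ[(Icc 1 N).image Nat.cast, M] := by
  set I : Finset (ZMod q) := (Icc 1 N).image Nat.cast
  have hI : #I = N := by
    rw [card_image_of_injOn, Nat.card_Icc, Nat.add_sub_cancel]
    exact (CharP.natCast_injOn_Iio (ZMod q) q).mono fun i hi ↦
      (mem_Icc.1 hi).2.trans_lt hN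
  have himage : (Icc 1 N ×ˢ M).image (fun x : ℕ × ZMod q ↦ (x.1 : ZMod q) * x.2) = I * M := by
    ext; simp [I, mem_mul, and_assoc]
  rw [himage, mul_pow, ← hI]
  exact le_card_mul_mul_mulEnergy I M

end Energy

lemma min_le_of_sq_le_mul {x p P J C : ℝ} (hx : 0 ≤ x) (hp : 0 < p) (hP : 0 < P) (hJ : 0 ≤ J)
    (hC : 0 ≤ C) (h : x ^ 2 ≤ J * (C * (x * (x / p + P)))) : min p (x * P⁻¹) ≤ 2 * C * J := by
  rcases hx.eq_or_lt with rfl | hx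
  · exact (min_le_right _ _).trans (by rw [zero_mul]; positivity)
  have hmin : min p (x * P⁻¹) * (x / p + P) ≤ 2 * x := by
    calc min p (x * P⁻¹) * (x / p + P) ≤ p * (x / p) + x * P⁻¹ * P := by
          rw [mul_add]
          gcongr
          exacts [min_le_left _ _, min_le_right _ _]
      _ = 2 * x := by field_simp; norm_num
  have : 0 < min p (x * P⁻¹) := lt_min hp (by positivity)
  refine le_of_mul_le_mul_right ?_ (pow_pos hx 2)
  calc min p (x * P⁻¹) * x ^ 2 ≤ min p (x * P⁻¹) * (J * (C * (x * (x / p + P)))) := by gcongr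
    _ = C * J * x * (min p (x * P⁻¹) * (x / p + P)) := by ring
    _ ≤ C * J * x * (2 * x) := by gcongr
    _ = 2 * C * J * x ^ 2 := by ring

theorem stmt_19 :
    ∀ ε : ℝ, 0 < ε → ∃ c : ℝ, 0 < c ∧ ∀ (p N : ℕ), p.Prime →
      (p : ℝ) ^ ((2 : ℝ) / 3) ≤ (N : ℝ) → N < p →
      ∀ (M : Finset (ZMod p)), (∀ m ∈ M, m ≠ 0) →
      ((((Finset.Icc 1 N) ×ˢ M).image
          (fun q : ℕ × ZMod p => (q.1 : ZMod p) * q.2)).card : ℝ)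
        ≥ c * min (p : ℝ) ((N : ℝ) * (M.card : ℝ) * (p : ℝ) ^ (-ε)) := by
  intro ε hε
  obtain ⟨C, hC, energy_le⟩ := exists_mulEnergy_natCast_Icc_le hε
  refine ⟨(2 * C)⁻¹, by positivity, fun p N hp hN hNp M hM ↦ ?_⟩
  have : Fact p.Prime := ⟨hp⟩
  have hp0 : (0 : ℝ) < p := mod_cast hp.pos
  rw [ge_iff_le, inv_mul_le_iff₀ (by positivity), Real.rpow_neg hp0.le]
  refine min_le_of_sq_le_mul (by positivity) hp0 (by positivity) (by positivity) hC.le ?_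
  have cauchy_schwarz := (Nat.cast_le (α := ℝ)).2 (sq_mul_card_le_card_image_mul_mulEnergy hNp M)
  push_cast at cauchy_schwarz
  exact cauchy_schwarz.trans (by gcongr; exact energy_le p N hN hNp.le M hM)
end
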